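/- Let k ≥ 2 be an integer and let P be a positive definite integral binary quadratic form of discriminant d < 0 whose CM point τ_P satisfies Re(Mτ_P) ≠ 0 for all M ∈ SL₂(ℤ). Then Re(r_0(f_{k,P})) = (−1)^k · Re(r_{2k−2}(f_{k,P})) = −|d|^{k−1/2} ζ_P(k) / (2(2k−1) · w_P · ζ(2k)), where ζ_P(s) := Σ_{(x,y)∈ℤ²∖{(0,0)}} P(x,y)^{−s} is the Epstein zeta function of P and ζ is the Riemann zeta function. (Equivalently, the outer periods of f_{k,P}^+ := ½(f_{k,P}+f_{k,P'}), P' := [a,−b,c], satisfy r_0(f_{k,P}^+) = (−1)^k r_{2k−2}(f_{k,P}^+) = −|d|^{k−1/2} ζ_P(k)/(2(2k−1) w_P ζ(2k)).) -/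

import Mathlib

open Complex MeasureTheory
open scoped Real

noncomputable section

namespace LHMF

abbrev SL2Z := Matrix.SpecialLinearGroup (Fin 2) ℤ

/-- Möbius action of `SL₂(ℤ)` on `ℂ`. -/
def moeb (M : SL2Z) (τ : ℂ) : ℂ :=
  ((M.1 0 0 : ℂ) * τ + (M.1 0 1 : ℂ)) / ((M.1 1 0 : ℂ) * τ + (M.1 1 1 : ℂ))

/-- Automorphy factor `j(M,τ) = cτ + d`. -/
def jfac (M : SL2Z) (τ : ℂ) : ℂ := (M.1 1 0 : ℂ) * τ + (M.1 1 1 : ℂ)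

/-- `E₁`: union of all `SL₂(ℤ)`-translates of the positive imaginary axis. -/
def E1 : Set ℂ := ⋃ M : SL2Z, (fun y : ℝ => moeb M ((y : ℂ) * Complex.I)) '' Set.Ioi 0

/-- Wirtinger derivative `∂f/∂τ`. -/
def dtau (f : ℂ → ℂ) (τ : ℂ) : ℂ :=
  (fderiv ℝ f τ 1 - Complex.I * fderiv ℝ f τ Complex.I) / 2

/-- Wirtinger derivative `∂f/∂τ̄`. -/
def dtaubar (f : ℂ → ℂ) (τ : ℂ) : ℂ :=
  (fderiv ℝ f τ 1 + Complex.I * fderiv ℝ f τ Complex.I) / 2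

/-- The operator `ξ_κ f = 2i v^κ conj(∂f/∂τ̄)`. -/
def xiOp (κ : ℤ) (f : ℂ → ℂ) (τ : ℂ) : ℂ :=
  2 * Complex.I * ((τ.im : ℂ) ^ κ) * starRingEnd ℂ (dtaubar f τ)

/-- The operator `𝒟 = (1/(2πi)) ∂/∂τ`. -/
def Dop (f : ℂ → ℂ) : ℂ → ℂ := fun τ => (2 * (π : ℂ) * Complex.I)⁻¹ * dtau f τ

/-- Maass raising operator of weight `κ`. -/
def raiseOp (κ : ℤ) (f : ℂ → ℂ) (τ : ℂ) : ℂ :=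
  2 * Complex.I * dtau f τ + (κ : ℂ) * (τ.im : ℂ)⁻¹ * f τ

/-- Iterated raising operator `R_κ^m = R_{κ+2m-2} ∘ ⋯ ∘ R_{κ+2} ∘ R_κ`. -/
def raiseIter (κ : ℤ) : ℕ → (ℂ → ℂ) → (ℂ → ℂ)
  | 0 => fun f => f
  | m + 1 => fun f => raiseOp (κ + 2 * m) (raiseIter κ m f)

/-- Petersson's Poincaré series `H_{k,k-1}(z,τ)`. -/
def Hpet (k : ℕ) (z τ : ℂ) : ℂ :=
  ∑' M : SL2Z, jfac M τ ^ (2 * k - 2) * ((moeb M τ).im : ℂ) ^ (2 * k - 1) *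
    (z - moeb M τ)⁻¹ * (z - starRingEnd ℂ (moeb M τ)) ^ (1 - 2 * (k : ℤ))

/-- The locally harmonic Maass form `H_{1-k,n}`. -/
def Hlhmf (k n : ℕ) (τ : ℂ) : ℂ :=
  (2 * Complex.I) ^ (2 * k - 2) / (2 * (π : ℂ)) *
    ∫ y in Set.Ioi (0 : ℝ), Hpet k ((y : ℂ) * Complex.I) τ * (y : ℂ) ^ n

/-- The cusp form `R_n` of weight `2k`. -/
def Rnform (k n : ℕ) (τ : ℂ) : ℂ :=
  (2 : ℂ) ^ (2 * k - 3) / (Complex.I ^ (2 * k - 1 - n) * (Nat.choose (2 * k - 2) n : ℂ) * (π : ℂ)) *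
    ∑' M : SL2Z, jfac M τ ^ (-2 * (k : ℤ)) * moeb M τ ^ (-(n : ℤ) - 1)

/-- Holomorphic Eichler integral of `f` (weight `2k`), along a vertical path. -/
def eichlerHol (k : ℕ) (f : ℂ → ℂ) (τ : ℂ) : ℂ :=
  (-2 * (π : ℂ) * Complex.I) ^ (2 * k - 1) / (Nat.factorial (2 * k - 2) : ℂ) *
    ∫ t in Set.Ioi (0 : ℝ), f (τ + (t : ℂ) * Complex.I) * ((t : ℂ) * Complex.I) ^ (2 * k - 2) *
      Complex.I

/-- Non-holomorphic Eichler integral `f^*` of `f` (weight `2k`), along a vertical path. -/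
def eichlerStar (k : ℕ) (f : ℂ → ℂ) (τ : ℂ) : ℂ :=
  (-2 * Complex.I) ^ (1 - 2 * (k : ℤ)) *
    ∫ t in Set.Ioi (0 : ℝ),
      starRingEnd ℂ (f (-(starRingEnd ℂ (-(starRingEnd ℂ τ) + (t : ℂ) * Complex.I)))) *
        (-(starRingEnd ℂ τ) + (t : ℂ) * Complex.I + τ) ^ (2 * k - 2) * Complex.I

/-- Bernoulli polynomial evaluated at a complex number. -/
def bernC (m : ℕ) (τ : ℂ) : ℂ := Polynomial.aeval τ (Polynomial.bernoulli m)

/-- Periodized Bernoulli polynomial `𝔹_m(τ) = B_m(τ - ⌊Re τ⌋)`. -/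
def bernPer (m : ℕ) (τ : ℂ) : ℂ := bernC m (τ - (⌊τ.re⌋ : ℂ))

/-- The period `r_n(E_{2k})` of the Eisenstein series, for `0 < n < 2k-2`. -/
def rnE (k n : ℕ) : ℚ :=
  if n % 2 = 0 then 0
  else (-1) ^ ((n - 1) / 2) * (2 * (k : ℚ)) * bernoulli (n + 1) * bernoulli (2 * k - 1 - n) /
    (bernoulli (2 * k) * ((n : ℚ) + 1) * ((2 * k - 1 - n : ℕ) : ℚ))

/-- The local polynomial `P_{1-k,n}`. -/
def Ppoly (k n : ℕ) (τ : ℂ) : ℂ :=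
  (rnE k n : ℂ)
  + (-Complex.I) ^ (n + 1) / ((n : ℂ) + 1) * bernPer (n + 1) τ
  + Complex.I ^ (n + 1) / ((2 * k - 1 - n : ℕ) : ℂ) * bernPer (2 * k - 1 - n) τ
  + Complex.I ^ (1 - (n : ℤ)) / 2 *
      ∑' M : {M : SL2Z // 0 < M.1 0 0 * M.1 1 0 ∧ (moeb M τ).re < 0},
        jfac M.1 τ ^ (2 * k - 2) *
          (moeb M.1 τ ^ n - (-1 : ℂ) ^ n * moeb M.1 τ ^ (2 * k - 2 - n))

/-- The binary quadratic form `[a,b,c]` evaluated at complex arguments. -/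
def qfC (a b c : ℤ) (x y : ℂ) : ℂ := (a : ℂ) * x ^ 2 + (b : ℂ) * x * y + (c : ℂ) * y ^ 2

/-- CM point of the positive definite form `[a,b,c]`. -/
def cmPoint (a b c : ℤ) : ℂ :=
  (-(b : ℂ) + Complex.I * ((Real.sqrt (((b ^ 2 - 4 * a * c).natAbs : ℝ))) : ℂ)) / (2 * (a : ℂ))

/-- The form `[a,b,c] ∘ M`. -/
def qfComp (a b c : ℤ) (M : SL2Z) : ℤ × ℤ × ℤ :=
  (a * (M.1 0 0) ^ 2 + b * (M.1 0 0) * (M.1 1 0) + c * (M.1 1 0) ^ 2,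
   2 * a * (M.1 0 0) * (M.1 0 1) + b * ((M.1 0 0) * (M.1 1 1) + (M.1 0 1) * (M.1 1 0)) +
     2 * c * (M.1 1 0) * (M.1 1 1),
   a * (M.1 0 1) ^ 2 + b * (M.1 0 1) * (M.1 1 1) + c * (M.1 1 1) ^ 2)

/-- `w_P`: order of the stabilizer of `P = [a,b,c]` in `PSL₂(ℤ)` (half the order of the
stabilizer in `SL₂(ℤ)`, which contains `±1`). -/
def wP (a b c : ℤ) : ℕ := Nat.card {M : SL2Z // qfComp a b c M = (a, b, c)} / 2

/-- The meromorphic modular form `f_{k,P}` for `P = [a,b,c]`. -/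
def fkP (k : ℕ) (a b c : ℤ) (z : ℂ) : ℂ :=
  (((((b ^ 2 - 4 * a * c).natAbs : ℝ)) ^ ((k : ℝ) - 1 / 2) : ℝ) : ℂ) /
      (2 * (π : ℂ) * (wP a b c : ℂ)) *
    ∑' M : SL2Z, (qfC a b c ((M.1 0 0 : ℂ) * z + (M.1 0 1 : ℂ))
      ((M.1 1 0 : ℂ) * z + (M.1 1 1 : ℂ))) ^ (-(k : ℤ))

/-- The `n`-th period `r_n(f) = ∫₀^∞ f(iy) y^n dy`. -/
def periodN (n : ℕ) (f : ℂ → ℂ) : ℂ :=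
  ∫ y in Set.Ioi (0 : ℝ), f ((y : ℂ) * Complex.I) * (y : ℂ) ^ n

/-- Epstein zeta function of `[a,b,c]` at an integer `k`. -/
def epstein (a b c : ℤ) (k : ℕ) : ℝ :=
  ∑' p : {p : ℤ × ℤ // p ≠ (0, 0)},
    ((a * p.1.1 ^ 2 + b * p.1.1 * p.1.2 + c * p.1.2 ^ 2 : ℤ) : ℝ) ^ (-(k : ℤ))

/-- `sgn(M)` for `M = (a,b;c,d)`: `sgn(ac)` if `ac ≠ 0`, else `sgn(bd)`. -/
def sgnM (M : SL2Z) : ℤ :=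
  if M.1 0 0 * M.1 1 0 ≠ 0 then Int.sign (M.1 0 0 * M.1 1 0) else Int.sign (M.1 0 1 * M.1 1 1)

/-- Upper incomplete Gamma function `Γ(s,x)` for a natural number `s`. -/
def GammaUpper (s : ℕ) (x : ℝ) : ℝ := ∫ t in Set.Ioi x, Real.exp (-t) * t ^ (s - 1)

/-- A cusp form of weight `2k` for `SL₂(ℤ)`, as a function on `ℂ` (holomorphic on `ℍ`,
modular of weight `2k`, vanishing at the cusp `i∞`). -/
def IsCuspForm2k (k : ℕ) (f : ℂ → ℂ) : Prop :=
  (∀ τ : ℂ, 0 < τ.im → DifferentiableAt ℂ f τ) ∧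
  (∀ (M : SL2Z) (τ : ℂ), 0 < τ.im → f (moeb M τ) = jfac M τ ^ (2 * k) * f τ) ∧
  Filter.Tendsto f (Filter.comap Complex.im Filter.atTop) (nhds 0)


section Aux
/-! ### Analytic preliminaries -/

open Filter Topology in
/-- Integral over the real line of a function holomorphic in the closed upper half plane
decaying quadratically. -/
lemma integral_halfplane_zero (φ : ℂ → ℂ) (hφ : ∀ z : ℂ, 0 ≤ z.im → DifferentiableAt ℂ φ z)
    (K R₀ : ℝ) (hb : ∀ z : ℂ, 0 ≤ z.im → R₀ ≤ ‖z‖ → ‖φ z‖ ≤ K / ‖z‖ ^ 2) :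
    ∫ t : ℝ, φ (t : ℂ) = 0 := by
  by_cases hInt0 : Integrable (fun t : ℝ => φ (t : ℂ))
  swap
  · exact integral_undef hInt0
  have h1 : Tendsto (fun R : ℝ => ∫ t in (-R)..R, φ (t : ℂ)) atTop
      (𝓝 (∫ t : ℝ, φ (t : ℂ))) :=
    intervalIntegral_tendsto_integral hInt0 tendsto_neg_atTop_atBot tendsto_id
  have h2 : Tendsto (fun R : ℝ => ∫ t in (-R)..R, φ (t : ℂ)) atTop (𝓝 0) := by
    have hlim : Tendsto (fun R : ℝ => 4 * |K| / R) atTop (𝓝 0) :=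
      tendsto_const_nhds.div_atTop tendsto_id
    refine squeeze_zero_norm' ?_ hlim
    filter_upwards [eventually_gt_atTop 0, eventually_ge_atTop R₀] with R hR hR0
    have hrect := Complex.integral_boundary_rect_eq_zero_of_differentiableOn φ
      (((-R : ℝ) : ℂ)) ((R : ℂ) + R * I) (by
        intro z hz
        refine (hφ z ?_).differentiableWithinAt
        have := hz.2
        simp only [Set.mem_preimage] at this
        rw [Set.mem_uIcc] at this
        simp at this
        rcases this with h | h <;> linarith [h.1])
    simp at hrect
    have bd : ∀ z : ℂ, 0 ≤ z.im → R ≤ ‖z‖ → ‖φ z‖ ≤ |K| / R ^ 2 := by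
      intro z hz1 hz2
      refine (hb z hz1 (hR0.trans hz2)).trans ?_
      gcongr
      exact le_abs_self K
    have e1 : ‖∫ x in (-R)..R, φ ((x : ℂ) + R * I)‖ ≤ |K| / R ^ 2 * |R - (-R)| := by
      refine intervalIntegral.norm_integral_le_of_norm_le_const fun x _ => bd _ (by simp [hR.le]) ?_
      have := Complex.abs_im_le_norm ((x : ℂ) + R * I)
      simp at this
      exact (le_abs_self R).trans this
    have e2 : ‖∫ y in (0 : ℝ)..R, φ ((R : ℂ) + y * I)‖ ≤ |K| / R ^ 2 * |R - 0| := by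
      refine intervalIntegral.norm_integral_le_of_norm_le_const fun y hy => bd _ ?_ ?_
      · rw [Set.uIoc_of_le hR.le] at hy
        simp [hy.1.le]
      have := Complex.abs_re_le_norm ((R : ℂ) + y * I)
      simp at this
      exact (le_abs_self R).trans this
    have e3 : ‖∫ y in (0 : ℝ)..R, φ (-(R : ℂ) + y * I)‖ ≤ |K| / R ^ 2 * |R - 0| := by
      refine intervalIntegral.norm_integral_le_of_norm_le_const fun y hy => bd _ ?_ ?_
      · rw [Set.uIoc_of_le hR.le] at hy
        simp [hy.1.le]
      have := Complex.abs_re_le_norm (-(R : ℂ) + y * I)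
      simp at this
      exact (le_abs_self R).trans this
    have key : ∫ t in (-R)..R, φ (t : ℂ) = (∫ x in (-R)..R, φ ((x : ℂ) + R * I))
        - I * (∫ y in (0 : ℝ)..R, φ ((R : ℂ) + y * I))
        + I * (∫ y in (0 : ℝ)..R, φ (-(R : ℂ) + y * I)) := by
      linear_combination hrect
    rw [key]
    refine (norm_add_le _ _).trans ((add_le_add_left (norm_sub_le _ _) _).trans ?_)
    rw [norm_mul, norm_mul, norm_I, one_mul, one_mul]
    refine (add_le_add (add_le_add e1 e2) e3).trans (le_of_eq ?_)
    rw [show R - -R = 2 * R by ring, sub_zero, abs_of_pos (show (0 : ℝ) < 2 * R by linarith), abs_of_pos hR]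
    field_simp
    norm_num
  exact tendsto_nhds_unique h1 h2

/-- The normalized quadratic polynomial. -/
def EE (x v u : ℝ) : ℂ := ((x : ℂ) + u * I) ^ 2 + (v : ℂ) ^ 2

lemma EE_normSq (x v u : ℝ) : ‖EE x v u‖ ^ 2 = (x ^ 2 + v ^ 2 - u ^ 2) ^ 2 + 4 * x ^ 2 * u ^ 2 := by
  rw [← Complex.normSq_eq_norm_sq, Complex.normSq_apply]
  simp [EE, pow_two]
  ring

/-- Lower bound on `EE` when `v² ≤ D x²`. -/
lemma EE_lower (D x v u : ℝ) (hv : v ^ 2 ≤ D * x ^ 2) (hD : 0 ≤ D) :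
    x ^ 2 + v ^ 2 + u ^ 2 ≤ (1 + D) * ‖EE x v u‖ := by
  refine abs_le_of_sq_le_sq' ?_ (by positivity) |>.2
  rw [mul_pow, EE_normSq]
  nlinarith [mul_nonneg hD (sq_nonneg (x ^ 2 + v ^ 2 - u ^ 2)), mul_nonneg hD (mul_nonneg (sq_nonneg x) (sq_nonneg u)),
    mul_le_mul_of_nonneg_right hv (sq_nonneg u), mul_nonneg (sq_nonneg D) (sq_nonneg (x ^ 2 + v ^ 2 - u ^ 2)), mul_nonneg (sq_nonneg D) (mul_nonneg (sq_nonneg x) (sq_nonneg u))]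

/-- Lower bound on `EE` for large `u`. -/
lemma EE_lower' (x v u : ℝ) (hv : 2 * |v| ≤ u) :
    x ^ 2 + u ^ 2 ≤ 4 * ‖EE x v u‖ := by
  refine abs_le_of_sq_le_sq' ?_ (by positivity) |>.2
  rw [mul_pow, EE_normSq]
  have : v ^ 2 ≤ u ^ 2 / 4 := by
    have := abs_nonneg v
    rw [← sq_abs v]; nlinarith
  nlinarith [sq_nonneg x, sq_nonneg u, sq_nonneg v, mul_nonneg (sq_nonneg x) (sq_nonneg u), mul_nonneg (sq_nonneg x) (sq_nonneg v), mul_nonneg (sq_nonneg u) (sub_nonneg.2 this), sq_nonneg (x^2), sq_nonneg (v^2)]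

lemma EE_conj (x v u : ℝ) : (starRingEnd ℂ) (EE x v u) = EE (-x) v u := by
  simp [EE]; ring

lemma EE_ne_zero {x v u : ℝ} (hx : x ≠ 0) (hu : u ≠ 0) : EE x v u ≠ 0 := by
  intro h
  have := EE_normSq x v u
  rw [h] at this
  simp at this
  have : 0 < 4 * x ^ 2 * u ^ 2 := by positivity
  nlinarith [sq_nonneg (x ^ 2 + v ^ 2 - u ^ 2)]

lemma EE_ne_zero' {x v : ℝ} (hx : x ≠ 0) (u : ℝ) : EE x v u ≠ 0 := by
  rcases eq_or_ne u 0 with rfl | hu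
  · intro h
    have := EE_normSq x v 0
    rw [h] at this
    simp at this
    have h1 : 0 < x ^ 2 := by positivity
    nlinarith [sq_nonneg v]
  · exact EE_ne_zero hx hu

lemma EE_continuous (x v : ℝ) : Continuous (EE x v) := by unfold EE; fun_prop

lemma EE_inv_bound (k : ℕ) (D x v u : ℝ) (hv : v ^ 2 ≤ D * x ^ 2) (hD : 0 ≤ D) (hx : x ≠ 0) :
    ‖(EE x v u ^ k)⁻¹‖ ≤ (1 + D) ^ k * ((x ^ 2 + v ^ 2 + u ^ 2) ^ k)⁻¹ := by
  have h1 := EE_lower D x v u hv hD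
  have h2 : 0 < x ^ 2 + v ^ 2 + u ^ 2 := by positivity
  have h3 : 0 < ‖EE x v u‖ := norm_pos_iff.2 (EE_ne_zero' hx u)
  rw [norm_inv, norm_pow, ← div_eq_mul_inv, ← div_pow, ← inv_pow]
  gcongr
  rw [inv_eq_one_div, div_le_div_iff₀ h3 h2]
  linarith

lemma EE_inv_bound' (k : ℕ) (x v u : ℝ) (hv : 2 * |v| ≤ u) (hu : 0 < u) :
    ‖(EE x v u ^ k)⁻¹‖ ≤ 4 ^ k * ((x ^ 2 + u ^ 2) ^ k)⁻¹ := by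
  have h1 := EE_lower' x v u hv
  have h2 : 0 < x ^ 2 + u ^ 2 := by positivity
  have h3 : 0 < ‖EE x v u‖ := by linarith
  rw [norm_inv, norm_pow, ← div_eq_mul_inv, ← div_pow, ← inv_pow]
  gcongr
  rw [inv_eq_one_div, div_le_div_iff₀ h3 h2]
  linarith

lemma integrable_inv_sq_add {x : ℝ} (hx : x ≠ 0) : Integrable (fun u : ℝ => (x ^ 2 + u ^ 2)⁻¹) := by
  have := (integrable_inv_one_add_sq.comp_mul_left' (inv_ne_zero hx)).const_mul ((x ^ 2)⁻¹)
  refine this.congr (Filter.Eventually.of_forall fun u => ?_)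
  simp only
  rw [← mul_inv]
  congr 1
  field_simp

lemma integral_inv_sq_add {x : ℝ} (hx : 0 < x) : ∫ u : ℝ, (x ^ 2 + u ^ 2)⁻¹ = π / x := by
  have h := Measure.integral_comp_mul_left (fun u : ℝ => (1 + u ^ 2)⁻¹) (x⁻¹)
  rw [integral_univ_inv_one_add_sq] at h
  have h2 : ∀ u : ℝ, (x ^ 2 + u ^ 2)⁻¹ = (x ^ 2)⁻¹ * (1 + (x⁻¹ * u) ^ 2)⁻¹ := by
    intro u
    rw [← mul_inv]
    congr 1
    field_simp
  simp_rw [h2]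
  rw [integral_const_mul, h]
  simp [abs_of_pos hx]
  field_simp

/-- elementary bound: `u^{2k-2} (x²+v²+u²)^{-k} ≤ (x²+u²)⁻¹`. -/
lemma pow_mul_inv_le {k : ℕ} (hk : 1 ≤ k) (x v u : ℝ) (hx : x ≠ 0) :
    u ^ (2 * k - 2) * ((x ^ 2 + v ^ 2 + u ^ 2) ^ k)⁻¹ ≤ (x ^ 2 + u ^ 2)⁻¹ := by
  obtain ⟨m, rfl⟩ : ∃ m, k = m + 1 := ⟨k - 1, by omega⟩
  rw [show 2 * (m + 1) - 2 = 2 * m by omega, pow_mul, pow_succ _ m, mul_inv, ← mul_assoc]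
  have hp : 0 < x ^ 2 + u ^ 2 := by positivity
  have hp' : 0 < x ^ 2 + v ^ 2 + u ^ 2 := by positivity
  have h1 : (u ^ 2) ^ m * ((x ^ 2 + v ^ 2 + u ^ 2) ^ m)⁻¹ ≤ 1 := by
    rw [← div_eq_mul_inv, ← div_pow]
    apply pow_le_one₀ (by positivity)
    rw [div_le_one hp']
    nlinarith [sq_nonneg x, sq_nonneg v]
  calc _ ≤ 1 * (x ^ 2 + v ^ 2 + u ^ 2)⁻¹ := by gcongr
    _ ≤ _ := by
      rw [one_mul]
      gcongr
      nlinarith [sq_nonneg v]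

/-- weighted kernel -/
def WW (k : ℕ) (x v u : ℝ) : ℂ := (u : ℂ) ^ (2 * k - 2) * (EE x v u ^ k)⁻¹

lemma WW_continuous (k : ℕ) {x v : ℝ} (hx : x ≠ 0) : Continuous (WW k x v) := by
  unfold WW
  refine Continuous.mul (by fun_prop) (((EE_continuous x v).pow k).inv₀ fun u => pow_ne_zero _ (EE_ne_zero' hx u))

lemma even_pow_norm (k : ℕ) (u : ℝ) : ‖(u : ℂ) ^ (2 * k - 2)‖ = u ^ (2 * k - 2) := by
  rw [norm_pow, Complex.norm_real, Real.norm_eq_abs, show 2 * k - 2 = 2 * (k - 1) by omega, pow_mul, pow_mul, sq_abs]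

lemma WW_bound {k : ℕ} (hk : 1 ≤ k) {D x v : ℝ} (u : ℝ) (hv : v ^ 2 ≤ D * x ^ 2) (hD : 0 ≤ D) (hx : x ≠ 0) :
    ‖WW k x v u‖ ≤ (1 + D) ^ k * (x ^ 2 + u ^ 2)⁻¹ := by
  unfold WW
  rw [norm_mul, even_pow_norm]
  have h0 : 0 ≤ u ^ (2 * k - 2) := by rw [← even_pow_norm]; positivity
  calc _ ≤ u ^ (2 * k - 2) * ((1 + D) ^ k * ((x ^ 2 + v ^ 2 + u ^ 2) ^ k)⁻¹) := by
        gcongr; exact EE_inv_bound k D x v u hv hD hx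
    _ = (1 + D) ^ k * (u ^ (2 * k - 2) * ((x ^ 2 + v ^ 2 + u ^ 2) ^ k)⁻¹) := by ring
    _ ≤ _ := by gcongr; exact pow_mul_inv_le hk x v u hx

lemma WW_integrable {k : ℕ} (hk : 1 ≤ k) {x v : ℝ} (hx : x ≠ 0) : Integrable (WW k x v) := by
  refine ((integrable_inv_sq_add hx).const_mul ((1 + v ^ 2 / x ^ 2) ^ k)).mono' (WW_continuous k hx).aestronglyMeasurable
    (Filter.Eventually.of_forall fun u => WW_bound hk u ?_ (by positivity) hx)
  field_simp
  exact le_rfl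

lemma WW_conj (k : ℕ) (x v u : ℝ) : (starRingEnd ℂ) (WW k x v u) = WW k (-x) v u := by
  simp [WW, EE_conj]

lemma WW_neg_u (k : ℕ) (x v u : ℝ) : (starRingEnd ℂ) (WW k x v u) = WW k x v (-u) := by
  rw [WW_conj]
  simp only [WW, EE]
  have h1 : ((-u : ℝ) : ℂ) ^ (2 * k - 2) = (u : ℂ) ^ (2 * k - 2) := by
    rw [ofReal_neg]; exact Even.neg_pow ⟨k - 1, by omega⟩ _
  rw [h1]
  congr 3
  push_cast
  ring

lemma WW_integral_neg {k : ℕ} (hk : 1 ≤ k) {x v : ℝ} (hx : x < 0) : ∫ u : ℝ, WW k x v u = 0 := by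
  set φ : ℂ → ℂ := fun z => z ^ (2 * k - 2) * (((x : ℂ) + z * I) ^ 2 + (v : ℂ) ^ 2)⁻¹ ^ k with hφ
  have hfac : ∀ z : ℂ, ((x : ℂ) + z * I) ^ 2 + (v : ℂ) ^ 2 = -((z - x * I + v) * (z - x * I - v)) := by
    intro z
    linear_combination (z ^ 2 + x ^ 2) * I_sq
  have hne : ∀ z : ℂ, 0 ≤ z.im → ((x : ℂ) + z * I) ^ 2 + (v : ℂ) ^ 2 ≠ 0 := by
    intro z hz h
    rw [hfac, neg_eq_zero, mul_eq_zero] at h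
    rcases h with h | h <;>
    · have := congrArg Complex.im h
      simp at this
      linarith
  have := integral_halfplane_zero φ ?_ (4 ^ k) (2 * (|x| + |v|) + 1) ?_
  · rw [← this]
    refine integral_congr_ae (Filter.Eventually.of_forall fun u => ?_)
    simp [hφ, WW, EE]
  · intro z hz
    have : DifferentiableAt ℂ (fun z : ℂ => (((x : ℂ) + z * I) ^ 2 + (v : ℂ) ^ 2)⁻¹) z :=
      DifferentiableAt.inv (by fun_prop) (hne z hz)
    exact DifferentiableAt.mul (by fun_prop) (this.pow k)
  · intro z hz hR
    have hz0 : 0 < ‖z‖ := by nlinarith [abs_nonneg x, abs_nonneg v]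
    have l1 : ‖z‖ / 2 ≤ ‖z - x * I + v‖ := by
      have : ‖z‖ ≤ ‖z - x * I + v‖ + ‖(x : ℂ) * I - v‖ := by
        refine le_trans (le_of_eq ?_) (norm_add_le _ _); congr 1; ring
      have h2 : ‖(x : ℂ) * I - v‖ ≤ |x| + |v| := (norm_sub_le _ _).trans (by simp)
      linarith
    have l2 : ‖z‖ / 2 ≤ ‖z - x * I - v‖ := by
      have : ‖z‖ ≤ ‖z - x * I - v‖ + ‖(x : ℂ) * I + v‖ := by
        refine le_trans (le_of_eq ?_) (norm_add_le _ _); congr 1; ring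
      have h2 : ‖(x : ℂ) * I + v‖ ≤ |x| + |v| := (norm_add_le _ _).trans (by simp)
      linarith
    have l3 : ‖z‖ ^ 2 / 4 ≤ ‖((x : ℂ) + z * I) ^ 2 + (v : ℂ) ^ 2‖ := by
      rw [hfac, norm_neg, norm_mul]
      calc _ = (‖z‖ / 2) * (‖z‖ / 2) := by ring
        _ ≤ _ := by gcongr
    simp only [hφ]
    rw [norm_mul, norm_pow, norm_pow, norm_inv]
    have l4 : ‖((x : ℂ) + z * I) ^ 2 + (v : ℂ) ^ 2‖⁻¹ ≤ (‖z‖ ^ 2 / 4)⁻¹ := by gcongr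
    calc _ ≤ ‖z‖ ^ (2 * k - 2) * ((‖z‖ ^ 2 / 4)⁻¹) ^ k := by gcongr
      _ = 4 ^ k / ‖z‖ ^ 2 := by
        obtain ⟨m, rfl⟩ : ∃ m, k = m + 1 := ⟨k - 1, by omega⟩
        rw [show 2 * (m + 1) - 2 = 2 * m by omega, inv_div, div_pow, ← pow_mul,
          show 2 * (m + 1) = 2 * m + 2 by ring, pow_add]
        field_simp
        ring

/-- The full integral has vanishing real part. -/
lemma WW_re_integral_zero {k : ℕ} (hk : 1 ≤ k) {x v : ℝ} (hx : x ≠ 0) :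
    ∫ u in Set.Ioi (0 : ℝ), (WW k x v u).re = 0 := by
  have hxneg : ∃ x' : ℝ, x' < 0 ∧ ∀ u, (WW k x v u).re = (WW k x' v u).re := by
    rcases lt_or_gt_of_ne hx with h | h
    · exact ⟨x, h, fun _ => rfl⟩
    · exact ⟨-x, by linarith, fun u => by rw [← WW_conj]; simp⟩
  obtain ⟨x', hx', he⟩ := hxneg
  simp_rw [he]
  have h1 := integral_comp_abs (f := fun u => (WW k x' v u).re)
  have h2 : ∀ u : ℝ, (WW k x' v |u|).re = (WW k x' v u).re := by
    intro u
    rcases abs_choice u with h | h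
    · rw [h]
    · rw [h, ← WW_neg_u]; simp
  simp_rw [h2] at h1
  have h3 : ∫ u : ℝ, (WW k x' v u).re = (∫ u : ℝ, WW k x' v u).re := by
    exact integral_re (WW_integrable hk hx'.ne)
  rw [h3, WW_integral_neg hk hx'] at h1
  simpa using h1.symm

open Filter Topology

lemma one_sub_normSq (s : ℝ) : ‖(1 : ℂ) - s * I‖ ^ 2 = 1 + s ^ 2 := by
  rw [← Complex.normSq_eq_norm_sq, Complex.normSq_apply]
  simp [pow_two]

lemma one_sub_ne (s : ℝ) : (1 : ℂ) - s * I ≠ 0 := by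
  intro h
  have := one_sub_normSq s
  rw [h] at this
  simp at this
  nlinarith [sq_nonneg s]

lemma one_sub_norm_ge (s : ℝ) : 1 ≤ ‖(1 : ℂ) - s * I‖ := by
  have := one_sub_normSq s
  nlinarith [sq_nonneg s, norm_nonneg ((1 : ℂ) - s * I)]

lemma integrable_one_sub_pow {j : ℕ} (hj : 2 ≤ j) :
    Integrable (fun s : ℝ => (((1 : ℂ) - s * I) ^ j)⁻¹) := by
  refine integrable_inv_one_add_sq.mono' ?_ (Eventually.of_forall fun s => ?_)
  · refine Continuous.aestronglyMeasurable ?_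
    exact Continuous.inv₀ (by fun_prop) fun s => pow_ne_zero _ (one_sub_ne s)
  · rw [norm_inv, norm_pow, ← one_sub_normSq]
    have := one_sub_norm_ge s
    gcongr

lemma integral_one_sub_pow {j : ℕ} (hj : 2 ≤ j) :
    ∫ s : ℝ, (((1 : ℂ) - s * I) ^ j)⁻¹ = 0 := by
  refine integral_halfplane_zero (fun z : ℂ => (((1 : ℂ) - z * I) ^ j)⁻¹) ?_ 4 2 ?_
  · intro z hz
    refine DifferentiableAt.inv (by fun_prop) (pow_ne_zero _ fun h => ?_)
    have := congrArg Complex.re h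
    simp at this
    linarith
  · intro z _ hz
    have h1 : ‖z‖ / 2 ≤ ‖(1 : ℂ) - z * I‖ := by
      have : ‖z * I‖ ≤ ‖(1 : ℂ) - z * I‖ + ‖(1 : ℂ)‖ := by
        rw [← norm_neg ((1 : ℂ) - z * I)]
        refine le_trans (le_of_eq ?_) (norm_add_le _ _); congr 1; ring
      simp at this
      linarith
    have h2 : 1 ≤ ‖(1 : ℂ) - z * I‖ := by linarith
    rw [norm_inv, norm_pow]
    calc (‖(1 : ℂ) - z * I‖ ^ j)⁻¹ ≤ (‖(1 : ℂ) - z * I‖ ^ 2)⁻¹ := by gcongr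
      _ ≤ ((‖z‖ / 2) ^ 2)⁻¹ := by gcongr
      _ = 4 / ‖z‖ ^ 2 := by field_simp; norm_num

lemma G_aux (m : ℕ) : Integrable (fun s : ℝ => ((((1 : ℂ) - s * I) ^ (m + 1))⁻¹).im / s) ∧
    ∫ s : ℝ, ((((1 : ℂ) - s * I) ^ (m + 1))⁻¹).im / s = π := by
  have hne0 : ∀ᵐ s : ℝ, s ≠ 0 := by
    simp [ae_iff]
  induction m with
  | zero =>
    have h : (fun s : ℝ => ((((1 : ℂ) - s * I) ^ (0 + 1))⁻¹).im / s) =ᵐ[volume] fun s : ℝ => (1 + s ^ 2)⁻¹ := by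
      filter_upwards [hne0] with s hs
      rw [zero_add, pow_one, Complex.inv_im, Complex.normSq_eq_norm_sq, one_sub_normSq]
      simp
      field_simp
    exact ⟨integrable_inv_one_add_sq.congr h.symm, by rw [integral_congr_ae h, integral_univ_inv_one_add_sq]⟩
  | succ m ih =>
    have h : (fun s : ℝ => ((((1 : ℂ) - s * I) ^ (m + 1 + 1))⁻¹).im / s) =ᵐ[volume]
        fun s : ℝ => ((((1 : ℂ) - s * I) ^ (m + 1))⁻¹).im / s + ((((1 : ℂ) - s * I) ^ (m + 2))⁻¹).re := by
      filter_upwards [hne0] with s hs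
      have h1 : (((1 : ℂ) - s * I) ^ (m + 1))⁻¹ = (((1 : ℂ) - s * I) ^ (m + 2))⁻¹ * (1 - s * I) := by
        have := one_sub_ne s
        rw [pow_succ _ (m + 1)]
        field_simp
      rw [h1]
      simp only [Complex.mul_im]
      simp
      field_simp
      ring
    have i2 := (integrable_one_sub_pow (j := m + 2) (by omega))
    have i3 : Integrable (fun s : ℝ => ((((1 : ℂ) - s * I) ^ (m + 2))⁻¹).re) := i2.re
    refine ⟨(ih.1.add i3).congr h.symm, ?_⟩
    rw [integral_congr_ae h, integral_add ih.1 i3, ih.2]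
    have : ∫ s : ℝ, ((((1 : ℂ) - s * I) ^ (m + 2))⁻¹).re = (∫ s : ℝ, (((1 : ℂ) - s * I) ^ (m + 2))⁻¹).re :=
      integral_re i2
    rw [this, integral_one_sub_pow (by omega)]
    simp

/-- limiting profile -/
def Hprof (k : ℕ) (s : ℝ) : ℝ :=
  (-1) ^ k / (2 * k - 1 : ℝ) * (((((1 : ℂ) - s * I) ^ (2 * k - 1))⁻¹).im / s)

lemma integral_Hprof {k : ℕ} (hk : 1 ≤ k) : ∫ s, Hprof k s = (-1) ^ k * π / (2 * k - 1) := by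
  unfold Hprof
  rw [integral_const_mul, show 2 * k - 1 = (2 * k - 2) + 1 by omega, (G_aux _).2]
  ring

lemma WW_zero_integral {k : ℕ} (hk : 1 ≤ k) {s : ℝ} (hs : s ≠ 0) :
    ∫ w in Set.Ioi (1 : ℝ), (WW k s 0 w).re = Hprof k s := by
  obtain ⟨m, rfl⟩ : ∃ m, k = m + 1 := ⟨k - 1, by omega⟩
  have hsw : ∀ w : ℝ, (s : ℂ) + w * I ≠ 0 := by
    intro w h
    have := congrArg Complex.re h
    simp at this
    exact hs this
  set Φ : ℝ → ℂ := fun w => ((w : ℂ) / (s + w * I)) ^ (2 * m + 1) / ((2 * m + 1) * s) with hΦ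
  have hder : ∀ w : ℝ, HasDerivAt Φ (WW (m + 1) s 0 w) w := by
    intro w
    have h1 : HasDerivAt (fun w : ℝ => (w : ℂ)) 1 w := Complex.ofRealCLM.hasDerivAt
    have h2 : HasDerivAt (fun w : ℝ => (s : ℂ) + w * I) (1 * I) w := (h1.mul_const I).const_add _
    have h3 := ((h1.div h2 (hsw w)).pow (2 * m + 1)).div_const ((2 * m + 1) * (s : ℂ))
    refine h3.congr_deriv ?_
    have hs' : (s : ℂ) ≠ 0 := by exact_mod_cast hs
    have hm : (2 * (m : ℂ) + 1) ≠ 0 := by exact_mod_cast (by omega : 2 * m + 1 ≠ 0)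
    have := hsw w
    simp only [WW, EE]
    simp only [ofReal_zero, ne_eq, OfNat.ofNat_ne_zero, not_false_eq_true, zero_pow, add_zero,
      Nat.add_sub_cancel, show 2 * (m + 1) - 2 = 2 * m by omega, Pi.div_apply]
    rw [← pow_mul, div_pow, show 2 * (m + 1) = 2 * m + 2 by ring, pow_add _ (2 * m) 2]
    push_cast
    field_simp
    ring
  have hlim : Tendsto Φ atTop (𝓝 ((1 / I) ^ (2 * m + 1) / ((2 * m + 1) * s))) := by
    have h1 : Tendsto (fun w : ℝ => (1 : ℂ) / ((s : ℂ) * ((w⁻¹ : ℝ) : ℂ) + I)) atTop (𝓝 (1 / ((s : ℂ) * ((0 : ℝ) : ℂ) + I))) := by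
      refine Tendsto.div tendsto_const_nhds ?_ (by simp)
      refine Tendsto.add (Tendsto.mul tendsto_const_nhds ?_) tendsto_const_nhds
      exact (Complex.continuous_ofReal.tendsto 0).comp tendsto_inv_atTop_zero
    simp only [ofReal_zero, mul_zero, zero_add] at h1
    refine ((h1.pow (2 * m + 1)).div_const _).congr' ?_
    filter_upwards [eventually_gt_atTop 0] with w hw
    simp only [hΦ]
    have hw' : (w : ℂ) ≠ 0 := by exact_mod_cast hw.ne'
    have := hsw w
    congr 2
    push_cast
    rw [show (s : ℂ) * (w : ℂ)⁻¹ + I = (s + w * I) / w by field_simp]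
    field_simp
  have hInt0 := integral_Ioi_of_hasDerivAt_of_tendsto (a := 1) (hder 1).continuousAt.continuousWithinAt
    (fun w _ => hder w) (WW_integrable (by omega) hs).integrableOn hlim
  have hre : ∫ w in Set.Ioi (1 : ℝ), (WW (m + 1) s 0 w).re = (∫ w in Set.Ioi (1 : ℝ), WW (m + 1) s 0 w).re :=
    integral_re (WW_integrable (by omega) hs).integrableOn
  rw [hre, hInt0]
  simp only [hΦ, Hprof]
  have hI : (1 / I) ^ (2 * m + 1) = (-1) ^ (m + 1) * I := by
    rw [one_div, inv_I, pow_succ, pow_mul, neg_sq, I_sq]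
    ring
  have h2 : (((1 : ℝ) : ℂ) / (s + (1 : ℝ) * I)) ^ (2 * m + 1) =
      (-1) ^ (m + 1) * I * (((1 : ℂ) - s * I) ^ (2 * m + 1))⁻¹ := by
    rw [← hI, ← inv_pow, ← mul_pow]
    congr 1
    rw [one_div I, ← mul_inv, ofReal_one, one_div, one_mul]
    congr 1
    linear_combination (s : ℂ) * I_sq
  rw [hI, h2, show 2 * (m + 1) - 1 = 2 * m + 1 by omega]
  rw [show ((2 * (m : ℂ) + 1) * s) = (((2 * m + 1) * s : ℝ) : ℂ) by push_cast; ring, Complex.sub_re,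
    Complex.div_ofReal_re, Complex.div_ofReal_re,
    show ((-1 : ℂ)) ^ (m + 1) = (((-1 : ℝ) ^ (m + 1) : ℝ) : ℂ) by push_cast; ring, mul_assoc, Complex.re_ofReal_mul,
    Complex.re_ofReal_mul, Complex.I_re, Complex.I_mul_re]
  push_cast
  rw [show (2 * ((m : ℝ) + 1) - 1) = 2 * m + 1 by ring]
  field_simp
  ring

/-- tail integral -/
def psi (k : ℕ) (x v T : ℝ) : ℝ := ∫ u in Set.Ioi T, (WW k x v u).re

lemma EE_scale (x v T w : ℝ) (hT : T ≠ 0) : EE x v (T * w) = (T : ℂ) ^ 2 * EE (x / T) (v / T) w := by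
  have : (T : ℂ) ≠ 0 := by exact_mod_cast hT
  simp only [EE]
  push_cast
  field_simp

lemma WW_scale {k : ℕ} (hk : 1 ≤ k) (x v T w : ℝ) (hT : T ≠ 0) :
    WW k x v (T * w) = ((T ^ 2)⁻¹ : ℝ) * WW k (x / T) (v / T) w := by
  have : (T : ℂ) ≠ 0 := by exact_mod_cast hT
  obtain ⟨m, rfl⟩ : ∃ m, k = m + 1 := ⟨k - 1, by omega⟩
  simp only [WW, EE_scale _ _ _ _ hT, show 2 * (m + 1) - 2 = 2 * m by omega]
  push_cast
  rw [mul_pow, mul_pow, mul_inv, ← pow_mul, show 2 * (m + 1) = 2 * m + 2 by ring, pow_add _ (2 * m) 2]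
  field_simp

lemma psi_scale {k : ℕ} (hk : 1 ≤ k) (x v : ℝ) {T : ℝ} (hT : 0 < T) :
    T * psi k x v T = ∫ w in Set.Ioi (1 : ℝ), (WW k (x / T) (v / T) w).re := by
  have h := integral_comp_mul_left_Ioi (fun u => (WW k x v u).re) 1 hT
  rw [mul_one] at h
  simp_rw [WW_scale hk x v T _ hT.ne', Complex.re_ofReal_mul] at h
  rw [integral_const_mul] at h
  unfold psi
  rw [smul_eq_mul] at h
  field_simp at h
  rw [h]

lemma integrableOn_inv_sq {T : ℝ} (hT : 0 < T) :
    IntegrableOn (fun u : ℝ => (u ^ 2)⁻¹) (Set.Ioi T) ∧ ∫ u in Set.Ioi T, (u ^ 2)⁻¹ = T⁻¹ := by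
  have e : ∀ u ∈ Set.Ioi T, (u ^ 2)⁻¹ = u ^ (-2 : ℝ) := by
    intro u hu
    have hu' : 0 < u := hT.trans hu
    rw [Real.rpow_neg hu'.le]
    norm_cast
  constructor
  · refine (integrableOn_Ioi_rpow_of_lt (by norm_num : (-2 : ℝ) < -1) hT).congr_fun
      (fun u hu => (e u hu).symm) measurableSet_Ioi
  · rw [setIntegral_congr_fun measurableSet_Ioi e, integral_Ioi_rpow_of_lt (by norm_num) hT]
    norm_num
    rw [Real.rpow_neg hT.le]
    simp

lemma psi_bound {k : ℕ} (hk : 1 ≤ k) {D x v T : ℝ} (hv : v ^ 2 ≤ D * x ^ 2) (hD : 0 ≤ D)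
    (hx : x ≠ 0) (hT : 0 < T) : |psi k x v T| ≤ 2 * (1 + D) ^ k * (T / (T ^ 2 + x ^ 2)) := by
  have hb : ∀ u, |(WW k x v u).re| ≤ (1 + D) ^ k * (x ^ 2 + u ^ 2)⁻¹ := fun u =>
    (Complex.abs_re_le_norm _).trans (WW_bound hk u hv hD hx)
  have hx2 : 0 < x ^ 2 := by positivity
  have hI : Integrable (fun u => (WW k x v u).re) := (WW_integrable hk hx).re
  have b1 : |psi k x v T| ≤ (1 + D) ^ k * T⁻¹ := by
    rw [← (integrableOn_inv_sq hT).2, ← integral_const_mul, ← Real.norm_eq_abs]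
    unfold psi
    refine norm_integral_le_of_norm_le ((integrableOn_inv_sq hT).1.const_mul _) ?_
    refine (ae_restrict_iff' measurableSet_Ioi).2 (Eventually.of_forall fun u hu => (hb u).trans ?_)
    have hu' : 0 < u := hT.trans hu
    gcongr
    linarith
  have b2 : |psi k x v T| ≤ (1 + D) ^ k * (x ^ 2)⁻¹ * T := by
    have h0 := WW_re_integral_zero hk (v := v) hx
    rw [← Set.Ioc_union_Ioi_eq_Ioi hT.le, setIntegral_union (Set.Ioc_disjoint_Ioi le_rfl) measurableSet_Ioi
      hI.integrableOn hI.integrableOn] at h0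
    have : psi k x v T = - ∫ u in Set.Ioc 0 T, (WW k x v u).re := by unfold psi; linarith
    rw [this, abs_neg, ← intervalIntegral.integral_of_le hT.le]
    have := intervalIntegral.norm_integral_le_of_norm_le_const (a := 0) (b := T)
      (f := fun u => (WW k x v u).re) (C := (1 + D) ^ k * (x ^ 2)⁻¹) (fun u _ => (hb u).trans (by
        gcongr; nlinarith [sq_nonneg u]))
    rwa [sub_zero, abs_of_pos hT] at this
  rcases le_total (x ^ 2) (T ^ 2) with h | h
  · refine b1.trans ?_
    rw [mul_comm 2, mul_assoc]
    gcongr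
    rw [inv_eq_one_div, mul_div_assoc', div_le_div_iff₀ hT (by positivity)]
    nlinarith
  · refine b2.trans ?_
    rw [mul_comm 2, mul_assoc, mul_assoc]
    refine mul_le_mul_of_nonneg_left ?_ (by positivity)
    rw [inv_mul_eq_div, mul_div_assoc', div_le_div_iff₀ hx2 (by positivity)]
    nlinarith

lemma psi_tendsto {k : ℕ} (hk : 1 ≤ k) {D v s : ℝ} (xT : ℝ → ℝ) (hD : 0 ≤ D) (hs : s ≠ 0)
    (hx : ∀ T, xT T ≠ 0) (hv : ∀ T, v ^ 2 ≤ D * xT T ^ 2)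
    (hlim : Tendsto (fun T => xT T / T) atTop (𝓝 s)) :
    Tendsto (fun T => T * psi k (xT T) v T) atTop (𝓝 (Hprof k s)) := by
  rw [← WW_zero_integral hk hs]
  have : Tendsto (fun T => ∫ w in Set.Ioi (1 : ℝ), (WW k (xT T / T) (v / T) w).re) atTop
      (𝓝 (∫ w in Set.Ioi (1 : ℝ), (WW k s 0 w).re)) := by
    refine tendsto_integral_filter_of_dominated_convergence (fun w => (1 + D) ^ k * (w ^ 2)⁻¹) ?_ ?_
      ((integrableOn_inv_sq one_pos).1.const_mul _) ?_
    · filter_upwards [eventually_gt_atTop 0] with T hT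
      exact (Complex.continuous_re.comp (WW_continuous k (div_ne_zero (hx T) hT.ne'))).aestronglyMeasurable
    · filter_upwards [eventually_gt_atTop 0] with T hT
      refine (ae_restrict_iff' measurableSet_Ioi).2 (Eventually.of_forall fun w hw => ?_)
      refine (Complex.abs_re_le_norm _).trans ((WW_bound hk w ?_ hD (div_ne_zero (hx T) hT.ne')).trans ?_)
      · rw [div_pow, div_pow, mul_div_assoc']
        gcongr
        exact hv T
      · have : (0 : ℝ) < w := one_pos.trans hw
        gcongr
        nlinarith [sq_nonneg (xT T / T)]
    · refine Eventually.of_forall fun w => ?_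
      have hv0 : Tendsto (fun T : ℝ => v / T) atTop (𝓝 0) := tendsto_const_nhds.div_atTop tendsto_id
      refine (Complex.continuous_re.tendsto _).comp ?_
      unfold WW
      refine Tendsto.mul tendsto_const_nhds (Tendsto.inv₀ (Tendsto.pow ?_ k) (pow_ne_zero _ (EE_ne_zero' hs w)))
      unfold EE
      refine Tendsto.add (Tendsto.pow (Tendsto.add ?_ tendsto_const_nhds) 2) (Tendsto.pow ?_ 2)
      · exact (Complex.continuous_ofReal.tendsto _).comp hlim
      · exact (Complex.continuous_ofReal.tendsto _).comp hv0
  refine this.congr' ?_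
  filter_upwards [eventually_gt_atTop 0] with T hT
  rw [psi_scale hk _ _ hT]

lemma hasSum_floor {E : Type*} [NormedAddCommGroup E] [NormedSpace ℝ E] [CompleteSpace E]
    (a : ℤ → E) (h : Integrable (fun t : ℝ => a ⌊t⌋)) :
    HasSum a (∫ t : ℝ, a ⌊t⌋) := by
  convert h.hasSum_intervalIntegral 0 using 2 with n
  have : ∫ t in ((0 : ℝ) + n)..((0 : ℝ) + n + 1), a ⌊t⌋ = ∫ t in ((0 : ℝ) + n)..((0 : ℝ) + n + 1), a n := by
    rw [intervalIntegral.integral_of_le (by linarith), intervalIntegral.integral_of_le (by linarith),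
      integral_Ioc_eq_integral_Ioo, integral_Ioc_eq_integral_Ioo]
    refine setIntegral_congr_fun measurableSet_Ioo fun t ht => ?_
    have : ⌊t⌋ = n := Int.floor_eq_iff.2 ⟨by linarith [ht.1], by linarith [ht.2]⟩
    simp [this]
  rw [this]
  simp

section coset
variable {k : ℕ} {D v x₀ : ℝ}

lemma floor_bound (T x₀ t : ℝ) (hT : 1 ≤ T) :
    T / (T ^ 2 + ((⌊t⌋ : ℝ) + x₀) ^ 2) ≤ 3 * (T * (T ^ 2 + (t + x₀) ^ 2)⁻¹) := by
  have h1 := Int.floor_le t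
  have h2 := Int.lt_floor_add_one t
  rw [← div_eq_mul_inv, mul_div_assoc', div_le_div_iff₀ (by positivity) (by positivity)]
  have h3 : (t + x₀) ^ 2 ≤ 2 * ((⌊t⌋ : ℝ) + x₀) ^ 2 + 2 := by
    set n : ℝ := (⌊t⌋ : ℝ)
    nlinarith [sq_nonneg ((n + x₀) - (t - n)), mul_nonneg (sub_nonneg.2 h1) (sub_nonneg.2 h2.le)]
  nlinarith [mul_le_mul_of_nonneg_left h3 (by linarith : (0 : ℝ) ≤ T), mul_nonneg (by linarith : (0 : ℝ) ≤ T) (sq_nonneg ((⌊t⌋ : ℝ) + x₀)),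
    mul_nonneg (by linarith : (0 : ℝ) ≤ T) (by nlinarith : (0 : ℝ) ≤ T ^ 2 - 1)]

lemma integral_shift (x₀ : ℝ) {T : ℝ} (hT : 0 < T) :
    Integrable (fun t : ℝ => (T ^ 2 + (t + x₀) ^ 2)⁻¹) ∧ ∫ t : ℝ, (T ^ 2 + (t + x₀) ^ 2)⁻¹ = π / T := by
  constructor
  · exact (integrable_inv_sq_add hT.ne').comp_add_right x₀
  · rw [integral_add_right_eq_self (fun t : ℝ => (T ^ 2 + t ^ 2)⁻¹) x₀, integral_inv_sq_add hT]

lemma coset_pt_bound (hk : 1 ≤ k) (hD : 0 ≤ D) (hx : ∀ n : ℤ, (n : ℝ) + x₀ ≠ 0)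
    (hv : ∀ n : ℤ, v ^ 2 ≤ D * ((n : ℝ) + x₀) ^ 2) {T : ℝ} (hT : 1 ≤ T) (t : ℝ) :
    ‖psi k ((⌊t⌋ : ℝ) + x₀) v T‖ ≤ 2 * (1 + D) ^ k * (3 * T) * (T ^ 2 + (t + x₀) ^ 2)⁻¹ := by
  refine (psi_bound hk (hv _) hD (hx _) (by linarith)).trans ?_
  rw [mul_assoc _ (3 * T)]
  gcongr
  refine (floor_bound T x₀ t hT).trans (le_of_eq (by ring))

lemma coset_integrable (hk : 1 ≤ k) (hD : 0 ≤ D) (hx : ∀ n : ℤ, (n : ℝ) + x₀ ≠ 0)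
    (hv : ∀ n : ℤ, v ^ 2 ≤ D * ((n : ℝ) + x₀) ^ 2) {T : ℝ} (hT : 1 ≤ T) :
    Integrable (fun t : ℝ => psi k ((⌊t⌋ : ℝ) + x₀) v T) := by
  have hT0 : 0 < T := by linarith
  refine ((integral_shift x₀ hT0).1.const_mul (2 * (1 + D) ^ k * (3 * T))).mono' ?_
    (Eventually.of_forall fun t => coset_pt_bound hk hD hx hv hT t)
  exact ((measurable_of_countable (fun n : ℤ => psi k ((n : ℝ) + x₀) v T)).comp Int.measurable_floor).aestronglyMeasurable

lemma coset_hasSum (hk : 1 ≤ k) (hD : 0 ≤ D) (hx : ∀ n : ℤ, (n : ℝ) + x₀ ≠ 0)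
    (hv : ∀ n : ℤ, v ^ 2 ≤ D * ((n : ℝ) + x₀) ^ 2) {T : ℝ} (hT : 1 ≤ T) :
    HasSum (fun n : ℤ => psi k ((n : ℝ) + x₀) v T) (∫ t : ℝ, psi k ((⌊t⌋ : ℝ) + x₀) v T) :=
  hasSum_floor (fun n : ℤ => psi k ((n : ℝ) + x₀) v T) (coset_integrable hk hD hx hv hT)

lemma coset_bound (hk : 1 ≤ k) (hD : 0 ≤ D) (hx : ∀ n : ℤ, (n : ℝ) + x₀ ≠ 0)
    (hv : ∀ n : ℤ, v ^ 2 ≤ D * ((n : ℝ) + x₀) ^ 2) {T : ℝ} (hT : 1 ≤ T) :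
    ‖∑' n : ℤ, psi k ((n : ℝ) + x₀) v T‖ ≤ 6 * (1 + D) ^ k * π := by
  have hT0 : 0 < T := by linarith
  rw [(coset_hasSum hk hD hx hv hT).tsum_eq]
  refine (norm_integral_le_of_norm_le ((integral_shift x₀ hT0).1.const_mul (2 * (1 + D) ^ k * (3 * T)))
    (Eventually.of_forall fun t => coset_pt_bound hk hD hx hv hT t)).trans (le_of_eq ?_)
  rw [integral_const_mul, (integral_shift x₀ hT0).2]
  field_simp
  ring

lemma coset_tendsto (hk : 1 ≤ k) (hD : 0 ≤ D) (hx : ∀ n : ℤ, (n : ℝ) + x₀ ≠ 0)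
    (hv : ∀ n : ℤ, v ^ 2 ≤ D * ((n : ℝ) + x₀) ^ 2) :
    Tendsto (fun T : ℝ => ∑' n : ℤ, psi k ((n : ℝ) + x₀) v T) atTop (𝓝 ((-1) ^ k * π / (2 * k - 1))) := by
  rw [← integral_Hprof hk]
  have main : Tendsto (fun T : ℝ => ∫ s : ℝ, T * psi k ((⌊T * s - x₀⌋ : ℝ) + x₀) v T) atTop (𝓝 (∫ s, Hprof k s)) := by
    refine tendsto_integral_filter_of_dominated_convergence (fun s => 2 * (1 + D) ^ k * 3 * (1 + s ^ 2)⁻¹) ?_ ?_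
      (integrable_inv_one_add_sq.const_mul _) ?_
    · refine Eventually.of_forall fun T => ?_
      refine AEStronglyMeasurable.const_mul ?_ T
      refine ((measurable_of_countable (fun n : ℤ => psi k ((n : ℝ) + x₀) v T)).comp
        (Int.measurable_floor.comp ?_)).aestronglyMeasurable
      fun_prop
    · filter_upwards [eventually_ge_atTop 1] with T hT
      refine Eventually.of_forall fun s => ?_
      have hT0 : 0 < T := by linarith
      rw [norm_mul, Real.norm_of_nonneg hT0.le]
      refine (mul_le_mul_of_nonneg_left (coset_pt_bound hk hD hx hv hT (T * s - x₀)) hT0.le).trans (le_of_eq ?_)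
      have : T ^ 2 + (T * s - x₀ + x₀) ^ 2 = T ^ 2 * (1 + s ^ 2) := by ring
      rw [this, mul_inv]
      field_simp
    · have hne0 : ∀ᵐ s : ℝ, s ≠ 0 := by simp [ae_iff]
      filter_upwards [hne0] with s hs
      refine psi_tendsto hk (fun T => (⌊T * s - x₀⌋ : ℝ) + x₀) hD hs (fun T => hx _) (fun T => hv _) ?_
      rw [tendsto_iff_norm_sub_tendsto_zero]
      refine squeeze_zero' (Eventually.of_forall fun _ => norm_nonneg _) ?_ (tendsto_inv_atTop_zero)
      filter_upwards [eventually_gt_atTop 0] with T hT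
      have h1 := Int.floor_le (T * s - x₀)
      have h2 := Int.lt_floor_add_one (T * s - x₀)
      have : ((⌊T * s - x₀⌋ : ℝ) + x₀) / T - s = ((⌊T * s - x₀⌋ : ℝ) + x₀ - T * s) * T⁻¹ := by field_simp
      rw [this, norm_mul, norm_inv, Real.norm_of_nonneg hT.le, Real.norm_eq_abs]
      refine mul_le_of_le_one_left (by positivity) ?_
      rw [abs_le]
      constructor <;> linarith
  refine main.congr' ?_
  filter_upwards [eventually_ge_atTop 1] with T hT
  have hT0 : 0 < T := by linarith
  rw [(coset_hasSum hk hD hx hv hT).tsum_eq, integral_const_mul,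
    Measure.integral_comp_mul_left (fun t => psi k ((⌊t - x₀⌋ : ℝ) + x₀) v T) T,
    integral_sub_right_eq_self (fun t => psi k ((⌊t⌋ : ℝ) + x₀) v T) x₀, abs_of_pos (inv_pos.2 hT0), smul_eq_mul]
  field_simp

end coset

lemma EE_horizontal_integral {k : ℕ} (hk : 1 ≤ k) {v u : ℝ} (hv : 2 * |v| ≤ u) (hu : 0 < u) :
    ∫ t : ℝ, (EE t v u ^ k)⁻¹ = 0 := by
  set φ : ℂ → ℂ := fun z => (((z + u * I) ^ 2 + (v : ℂ) ^ 2) ^ k)⁻¹ with hφ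
  have hfac : ∀ z : ℂ, (z + u * I) ^ 2 + (v : ℂ) ^ 2 = (z + u * I + v * I) * (z + u * I - v * I) := by
    intro z
    linear_combination (v ^ 2 : ℂ) * I_sq
  have habs := abs_le.1 (show |v| ≤ u / 2 by linarith)
  have hne : ∀ z : ℂ, 0 ≤ z.im → (z + u * I) ^ 2 + (v : ℂ) ^ 2 ≠ 0 := by
    intro z hz h
    rw [hfac, mul_eq_zero] at h
    rcases h with h | h <;>
    · have := congrArg Complex.im h
      simp at this
      linarith
  refine integral_halfplane_zero φ ?_ 4 (2 * (u + |v|) + 2) ?_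
  · intro z hz
    exact DifferentiableAt.inv (by fun_prop) (pow_ne_zero _ (hne z hz))
  · intro z hz hR
    have hv0 := abs_nonneg v
    have hz0 : 0 < ‖z‖ := by linarith
    have l1 : ‖z‖ / 2 ≤ ‖z + u * I + v * I‖ := by
      have : ‖z‖ ≤ ‖z + u * I + v * I‖ + ‖-((u : ℂ) * I + v * I)‖ := by
        refine le_trans (le_of_eq ?_) (norm_add_le _ _); congr 1; ring
      have h2 : ‖-((u : ℂ) * I + v * I)‖ ≤ |u| + |v| := by
        rw [norm_neg]; exact (norm_add_le _ _).trans (by simp)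
      rw [abs_of_pos hu] at h2
      linarith
    have l2 : ‖z‖ / 2 ≤ ‖z + u * I - v * I‖ := by
      have : ‖z‖ ≤ ‖z + u * I - v * I‖ + ‖-((u : ℂ) * I - v * I)‖ := by
        refine le_trans (le_of_eq ?_) (norm_add_le _ _); congr 1; ring
      have h2 : ‖-((u : ℂ) * I - v * I)‖ ≤ |u| + |v| := by
        rw [norm_neg]; exact (norm_sub_le _ _).trans (by simp)
      rw [abs_of_pos hu] at h2
      linarith
    have l3 : ‖z‖ ^ 2 / 4 ≤ ‖(z + u * I) ^ 2 + (v : ℂ) ^ 2‖ := by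
      rw [hfac, norm_mul]
      calc _ = (‖z‖ / 2) * (‖z‖ / 2) := by ring
        _ ≤ _ := by gcongr
    have l4 : 1 ≤ ‖z‖ ^ 2 / 4 := by nlinarith
    simp only [hφ]
    rw [norm_inv, norm_pow]
    calc _ ≤ ((‖z‖ ^ 2 / 4) ^ k)⁻¹ := by gcongr
      _ ≤ ((‖z‖ ^ 2 / 4) ^ 1)⁻¹ := by gcongr
      _ = 4 / ‖z‖ ^ 2 := by rw [pow_one, inv_div]

lemma shift_compare {u s t : ℝ} (hu : 1 ≤ u) (h : |s - t| ≤ 1) :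
    (u ^ 2 + s ^ 2)⁻¹ ≤ 3 * (u ^ 2 + t ^ 2)⁻¹ := by
  have h2 := abs_le.1 h
  rw [inv_eq_one_div, ← div_eq_mul_inv, div_le_div_iff₀ (by positivity) (by positivity)]
  nlinarith [sq_nonneg (s + (s - t)), mul_nonneg (by linarith : 0 ≤ 1 + (s - t)) (by linarith : 0 ≤ 1 - (s - t)), sq_nonneg s]

lemma EE_deriv_bound {k : ℕ} (hk : 1 ≤ k) {v u : ℝ} (hv : 2 * |v| ≤ u) (hu : 0 < u) (t : ℝ) :
    ∃ d : ℂ, HasDerivAt (fun t : ℝ => (EE t v u ^ k)⁻¹) d t ∧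
      ‖d‖ ≤ 2 * k * 4 ^ (k + 1) * (u ^ (2 * k - 1))⁻¹ * (u ^ 2 + t ^ 2)⁻¹ := by
  have hne : EE t v u ≠ 0 := by
    have := EE_lower' t v u hv
    intro h
    rw [h] at this
    simp at this
    nlinarith [sq_nonneg t]
  have h1 : HasDerivAt (fun t : ℝ => (t : ℂ) + u * I) 1 t := (Complex.ofRealCLM.hasDerivAt).add_const _
  have h2 : HasDerivAt (fun t : ℝ => EE t v u) (2 * (t + u * I)) t := by
    have := (h1.pow 2).add_const ((v : ℂ) ^ 2)
    refine this.congr_deriv ?_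
    simp
  have h3 := (h2.pow k).inv (pow_ne_zero k hne)
  refine ⟨_, h3, ?_⟩
  have e : -(↑k * EE t v u ^ (k - 1) * (2 * (t + u * I))) / (EE t v u ^ k) ^ 2
      = -(2 * k) * (t + u * I) * (EE t v u ^ (k + 1))⁻¹ := by
    obtain ⟨m, rfl⟩ : ∃ m, k = m + 1 := ⟨k - 1, by omega⟩
    rw [Nat.add_sub_cancel, ← pow_mul, show (m + 1) * 2 = m + (m + 1 + 1) by ring, pow_add]
    field_simp
  have e' := congrArg norm e
  simp only [Pi.pow_apply]
  rw [e']
  rw [norm_mul, norm_mul, norm_neg]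
  have hb := EE_inv_bound' (k + 1) t v u hv hu
  set r := ‖(t : ℂ) + u * I‖ with hr
  have hr2 : t ^ 2 + u ^ 2 = r ^ 2 := by
    rw [hr, ← Complex.normSq_eq_norm_sq, Complex.normSq_apply]; simp; ring
  have hru : u ≤ r := by
    refine abs_le_of_sq_le_sq' ?_ (norm_nonneg _) |>.2
    nlinarith [sq_nonneg t]
  have hr0 : 0 < r := by linarith
  rw [hr2] at hb
  rw [add_comm (u ^ 2), hr2]
  have hn : ‖(2 * (k : ℂ))‖ = 2 * k := by simp
  rw [hn]
  calc 2 * (k : ℝ) * r * ‖(EE t v u ^ (k + 1))⁻¹‖ ≤ 2 * k * r * (4 ^ (k + 1) * ((r ^ 2) ^ (k + 1))⁻¹) := by gcongr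
    _ = 2 * k * 4 ^ (k + 1) * (r ^ (2 * k - 1))⁻¹ * (r ^ 2)⁻¹ := by
      obtain ⟨m, rfl⟩ : ∃ m, k = m + 1 := ⟨k - 1, by omega⟩
      rw [← pow_mul, show 2 * (m + 1) - 1 = 2 * m + 1 by omega, show 2 * (m + 1 + 1) = (2 * m + 1) + 2 + 1 by ring,
        pow_succ _ (2 * m + 1 + 2), pow_add]
      field_simp
      ring
    _ ≤ _ := by gcongr

lemma coset_decay {k : ℕ} (hk : 1 ≤ k) (x₀ : ℝ) {v u : ℝ} (hv : 2 * |v| ≤ u) (hu : 1 ≤ u) :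
    ‖∑' n : ℤ, (EE ((n : ℝ) + x₀) v u ^ k)⁻¹‖ ≤ 6 * k * 4 ^ (k + 1) * π * (u ^ (2 * k))⁻¹ := by
  have hu0 : 0 < u := by linarith
  have hsh := integral_shift x₀ hu0
  have hcont : Continuous (fun t : ℝ => (EE t v u ^ k)⁻¹) := by
    rw [continuous_iff_continuousAt]
    intro t
    obtain ⟨d, hd, _⟩ := EE_deriv_bound hk hv hu0 t
    exact hd.continuousAt
  have hb : ∀ t : ℝ, ‖(EE t v u ^ k)⁻¹‖ ≤ 4 ^ k * (u ^ 2 + t ^ 2)⁻¹ := by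
    intro t
    refine (EE_inv_bound' k t v u hv hu0).trans ?_
    rw [add_comm]
    have h1 : 1 ≤ u ^ 2 + t ^ 2 := by nlinarith [sq_nonneg t]
    gcongr
    exact le_self_pow₀ h1 (by omega)
  have hfl : ∀ t : ℝ, |(⌊t⌋ : ℝ) + x₀ - (t + x₀)| ≤ 1 := by
    intro t
    have h1 := Int.floor_le t
    have h2 := Int.lt_floor_add_one t
    rw [abs_le]; constructor <;> linarith
  have i1 : Integrable (fun t : ℝ => (EE ((⌊t⌋ : ℝ) + x₀) v u ^ k)⁻¹) := by
    refine (hsh.1.const_mul (4 ^ k * 3)).mono' ?_ (Eventually.of_forall fun t => ?_)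
    · exact ((measurable_of_countable (fun n : ℤ => (EE ((n : ℝ) + x₀) v u ^ k)⁻¹)).comp Int.measurable_floor).aestronglyMeasurable
    · refine (hb _).trans ?_
      rw [mul_assoc]
      gcongr
      exact shift_compare hu (hfl t)
  have i2 : Integrable (fun t : ℝ => (EE (t + x₀) v u ^ k)⁻¹) := by
    refine (hsh.1.const_mul (4 ^ k)).mono' ?_ (Eventually.of_forall fun t => hb _)
    exact (hcont.comp (continuous_add_const x₀)).aestronglyMeasurable
  have z2 : ∫ t : ℝ, (EE (t + x₀) v u ^ k)⁻¹ = 0 := by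
    rw [integral_add_right_eq_self (fun t : ℝ => (EE t v u ^ k)⁻¹) x₀, EE_horizontal_integral hk hv hu0]
  have hs := hasSum_floor (fun n : ℤ => (EE ((n : ℝ) + x₀) v u ^ k)⁻¹) i1
  rw [hs.tsum_eq]
  have : ∫ t : ℝ, (EE ((⌊t⌋ : ℝ) + x₀) v u ^ k)⁻¹ =
      ∫ t : ℝ, ((EE ((⌊t⌋ : ℝ) + x₀) v u ^ k)⁻¹ - (EE (t + x₀) v u ^ k)⁻¹) := by
    rw [integral_sub i1 i2, z2, sub_zero]
  rw [this]
  set K : ℝ := 2 * k * 4 ^ (k + 1) * (u ^ (2 * k - 1))⁻¹ with hK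
  have hK0 : 0 ≤ K := by positivity
  refine (norm_integral_le_of_norm_le (hsh.1.const_mul (K * 3)) (Eventually.of_forall fun t => ?_)).trans (le_of_eq ?_)
  · choose d hd hdb using fun s => EE_deriv_bound hk hv hu0 s
    have mv := (convex_uIcc (t + x₀) ((⌊t⌋ : ℝ) + x₀)).norm_image_sub_le_of_norm_hasDerivWithin_le
      (f := fun t : ℝ => (EE t v u ^ k)⁻¹) (f' := d) (C := K * 3 * (u ^ 2 + (t + x₀) ^ 2)⁻¹)
      (x := t + x₀) (y := (⌊t⌋ : ℝ) + x₀)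
      (fun s _ => (hd s).hasDerivWithinAt) (fun s hs => by
        refine (hdb s).trans ?_
        rw [mul_assoc K]
        gcongr
        refine shift_compare hu (le_trans ?_ (hfl t))
        exact Set.abs_sub_left_of_mem_uIcc hs) Set.left_mem_uIcc Set.right_mem_uIcc
    refine mv.trans (mul_le_of_le_one_right (by positivity) (hfl t))
  · rw [integral_const_mul, hsh.2, hK]
    obtain ⟨m, rfl⟩ : ∃ m, k = m + 1 := ⟨k - 1, by omega⟩
    rw [show 2 * (m + 1) - 1 = 2 * m + 1 by omega, show 2 * (m + 1) = 2 * m + 1 + 1 by ring, pow_succ _ (2 * m + 1)]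
    field_simp
    ring

/-! ### Arithmetic of the form -/

/-- value of the form -/
def QA (a b c p q : ℤ) : ℤ := a * p ^ 2 + b * p * q + c * q ^ 2

section arith
variable {a b c : ℤ}

lemma c_pos (ha : 0 < a) (hd : b ^ 2 - 4 * a * c < 0) : 0 < c := by
  by_contra h
  push Not at h
  nlinarith [sq_nonneg b, mul_nonneg ha.le (neg_nonneg.2 h)]

lemma QA_lower1 (ha : 0 < a) (p q : ℤ) :
    (4 * a * c - b ^ 2) * q ^ 2 ≤ 4 * a * QA a b c p q := by
  unfold QA
  nlinarith [sq_nonneg (2 * a * p + b * q)]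

lemma QA_lower2 (p q : ℤ) :
    (4 * a * c - b ^ 2) * p ^ 2 ≤ 4 * c * QA a b c p q := by
  unfold QA
  nlinarith [sq_nonneg (2 * c * q + b * p)]

lemma QA_pos (ha : 0 < a) (hd : b ^ 2 - 4 * a * c < 0) {p q : ℤ} (h : p ≠ 0 ∨ q ≠ 0) :
    0 < QA a b c p q := by
  have hc := c_pos ha hd
  have hD : 0 < 4 * a * c - b ^ 2 := by linarith
  rcases h with h | h
  · have h1 := QA_lower2 (a := a) (b := b) (c := c) p q
    have h2 : 0 < (4 * a * c - b ^ 2) * p ^ 2 := by positivity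
    by_contra h3
    push Not at h3
    nlinarith [mul_nonneg hc.le (neg_nonneg.2 h3)]
  · have h1 := QA_lower1 (b := b) (c := c) ha p q
    have h2 : 0 < (4 * a * c - b ^ 2) * q ^ 2 := by positivity
    by_contra h3
    push Not at h3
    nlinarith [mul_nonneg ha.le (neg_nonneg.2 h3)]

/-- discriminant in absolute value -/
def DD (a b c : ℤ) : ℝ := 4 * a * c - b ^ 2

lemma DD_pos (hd : b ^ 2 - 4 * a * c < 0) : 0 < DD a b c := by
  unfold DD
  have : (0 : ℤ) < 4 * a * c - b ^ 2 := by linarith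
  exact_mod_cast this

lemma DD_natAbs (hd : b ^ 2 - 4 * a * c < 0) : (((b ^ 2 - 4 * a * c).natAbs : ℕ) : ℝ) = DD a b c := by
  rw [Nat.cast_natAbs, abs_of_neg hd]
  unfold DD
  push_cast
  ring

lemma QA_lower (ha : 0 < a) (hd : b ^ 2 - 4 * a * c < 0) :
    ∃ c₀ : ℝ, 0 < c₀ ∧ ∀ x : Fin 2 → ℤ, c₀ * ‖x‖ ^ 2 ≤ (QA a b c (x 0) (x 1) : ℝ) := by
  have hc := c_pos ha hd
  have hD := DD_pos hd
  have hs : (0 : ℝ) < 4 * (a + c) := by exact_mod_cast (by linarith : (0 : ℤ) < 4 * (a + c))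
  refine ⟨DD a b c / (4 * (a + c)), by positivity, fun x => ?_⟩
  rw [div_mul_eq_mul_div, div_le_iff₀ hs]
  have haR : (0 : ℝ) < a := by exact_mod_cast ha
  have hcR : (0 : ℝ) < c := by exact_mod_cast hc
  have hQ : (0 : ℝ) ≤ QA a b c (x 0) (x 1) := by
    by_cases h : x 0 ≠ 0 ∨ x 1 ≠ 0
    · exact_mod_cast (QA_pos ha hd h).le
    · push Not at h
      simp [QA, h.1, h.2]
  have h1 : DD a b c * (x 1 : ℝ) ^ 2 ≤ 4 * a * (QA a b c (x 0) (x 1) : ℝ) := by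
    unfold DD; exact_mod_cast QA_lower1 (b := b) (c := c) ha (x 0) (x 1)
  have h2 : DD a b c * (x 0 : ℝ) ^ 2 ≤ 4 * c * (QA a b c (x 0) (x 1) : ℝ) := by
    unfold DD; exact_mod_cast QA_lower2 (a := a) (b := b) (c := c) (x 0) (x 1)
  have hn : ‖x‖ ^ 2 = (x 0 : ℝ) ^ 2 ∨ ‖x‖ ^ 2 = (x 1 : ℝ) ^ 2 := by
    rw [EisensteinSeries.norm_eq_max_natAbs]
    rcases le_total (x 0).natAbs (x 1).natAbs with h | h
    · right; rw [max_eq_right h, Nat.cast_natAbs]; simp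
    · left; rw [max_eq_left h, Nat.cast_natAbs]; simp
  rcases hn with hn | hn <;> rw [hn] <;>
    nlinarith [mul_nonneg haR.le hQ, mul_nonneg hcR.le hQ]

/-- coprime pairs -/
abbrev CP := {p : ℤ × ℤ // IsCoprime p.1 p.2}

lemma CP_ne (p : CP) : p.1.1 ≠ 0 ∨ p.1.2 ≠ 0 := by
  by_contra h
  push Not at h
  obtain ⟨u, w, hw⟩ := p.2
  rw [h.1, h.2] at hw
  simp at hw

lemma QA_CP_ge (ha : 0 < a) (hd : b ^ 2 - 4 * a * c < 0) (p : CP) :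
    (1 : ℝ) ≤ QA a b c p.1.1 p.1.2 := by
  exact_mod_cast QA_pos ha hd (CP_ne p)

lemma summable_QA (ha : 0 < a) (hd : b ^ 2 - 4 * a * c < 0) :
    Summable (fun p : CP => (QA a b c p.1.1 p.1.2 : ℝ) ^ (-(5 / 4) : ℝ)) := by
  obtain ⟨c₀, hc0, hb⟩ := QA_lower ha hd
  have h1 := EisensteinSeries.summable_one_div_norm_rpow (k := 5 / 2) (by norm_num)
  have hinj : Function.Injective (fun p : CP => ![p.1.1, p.1.2]) := by
    intro p q h
    have h0 := congrFun h 0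
    have h1 := congrFun h 1
    simp at h0 h1
    exact Subtype.ext (Prod.ext h0 h1)
  have h2 := (h1.comp_injective hinj).mul_left (c₀ ^ (-(5 / 4) : ℝ))
  refine Summable.of_nonneg_of_le (fun p => ?_) (fun p => ?_) h2
  · have := QA_CP_ge ha hd p
    positivity
  · have h3 := hb ![p.1.1, p.1.2]
    simp only [Matrix.cons_val_zero, Matrix.cons_val_one] at h3
    have hn : 0 < ‖(![p.1.1, p.1.2] : Fin 2 → ℤ)‖ := by
      rw [norm_pos_iff]
      intro h
      have h0 := congrFun h 0
      have h1 := congrFun h 1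
      simp at h0 h1
      rcases CP_ne p with h | h
      · exact h h0
      · exact h h1
    simp only [Function.comp]
    calc (QA a b c p.1.1 p.1.2 : ℝ) ^ (-(5 / 4) : ℝ) ≤ (c₀ * ‖(![p.1.1, p.1.2] : Fin 2 → ℤ)‖ ^ 2) ^ (-(5 / 4) : ℝ) :=
          Real.rpow_le_rpow_of_nonpos (by positivity) h3 (by norm_num)
      _ = _ := by
        rw [Real.mul_rpow hc0.le (by positivity), ← Real.rpow_natCast, ← Real.rpow_mul hn.le]
        norm_num

/-- Bezout completion of a coprime pair, shifted by `n`. -/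
def mkM (pn : CP × ℤ) : SL2Z :=
  ⟨!![pn.1.1.1, -(pn.1.2.choose_spec.choose) + pn.2 * pn.1.1.1; pn.1.1.2, pn.1.2.choose + pn.2 * pn.1.1.2], by
    have := pn.1.2.choose_spec.choose_spec
    rw [Matrix.det_fin_two_of]
    linear_combination this⟩

lemma mkM_bijective : Function.Bijective mkM := by
  constructor
  · rintro ⟨p, n⟩ ⟨q, m⟩ h
    have h' := congrArg Subtype.val h
    have h00 := congrFun (congrFun h' 0) 0
    have h10 := congrFun (congrFun h' 1) 0
    simp [mkM] at h00 h10
    have hpq : p = q := Subtype.ext (Prod.ext h00 h10)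
    subst hpq
    have h01 := congrFun (congrFun h' 0) 1
    have h11 := congrFun (congrFun h' 1) 1
    simp [mkM] at h01 h11
    have : n = m := by
      rcases CP_ne p with h | h
      · rcases h01 with h1 | h1
        · exact h1
        · exact absurd h1 h
      · rcases h11 with h1 | h1
        · exact h1
        · exact absurd h1 h
    rw [this]
  · intro M
    have hdet := M.2
    rw [Matrix.det_fin_two] at hdet
    have hcp : IsCoprime (M.1 0 0) (M.1 1 0) := ⟨M.1 1 1, -M.1 0 1, by linear_combination hdet⟩
    set u := hcp.choose with hu
    set w := hcp.choose_spec.choose with hw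
    have huw : u * M.1 0 0 + w * M.1 1 0 = 1 := hcp.choose_spec.choose_spec
    refine ⟨(⟨(M.1 0 0, M.1 1 0), hcp⟩, u * M.1 0 1 + w * M.1 1 1), ?_⟩
    apply Subtype.ext
    ext i j
    fin_cases i <;> fin_cases j <;> simp [mkM]
    · change -w + (u * M.1 0 1 + w * M.1 1 1) * M.1 0 0 = M.1 0 1
      linear_combination w * hdet + M.1 0 1 * huw
    · change u + (u * M.1 0 1 + w * M.1 1 1) * M.1 1 0 = M.1 1 1
      linear_combination -u * hdet + M.1 1 1 * huw

/-- first coefficient -/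
def cA (a b c : ℤ) (M : SL2Z) : ℤ := QA a b c (M.1 0 0) (M.1 1 0)
/-- third coefficient -/
def cC (a b c : ℤ) (M : SL2Z) : ℤ := QA a b c (M.1 0 1) (M.1 1 1)
/-- middle coefficient -/
def cB (a b c : ℤ) (M : SL2Z) : ℤ := 2 * a * (M.1 0 0) * (M.1 0 1) + b * ((M.1 0 0) * (M.1 1 1) + (M.1 0 1) * (M.1 1 0)) +
     2 * c * (M.1 1 0) * (M.1 1 1)

lemma det_eq (M : SL2Z) : M.1 0 0 * M.1 1 1 - M.1 0 1 * M.1 1 0 = 1 := by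
  have := M.2
  rwa [Matrix.det_fin_two] at this

lemma cdisc (M : SL2Z) : cB a b c M ^ 2 - 4 * cA a b c M * cC a b c M = b ^ 2 - 4 * a * c := by
  have h := det_eq M
  have : cB a b c M ^ 2 - 4 * cA a b c M * cC a b c M =
      (b ^ 2 - 4 * a * c) * (M.1 0 0 * M.1 1 1 - M.1 0 1 * M.1 1 0) ^ 2 := by
    unfold cA cB cC QA; ring
  rw [this, h]; ring

lemma cA_pos (ha : 0 < a) (hd : b ^ 2 - 4 * a * c < 0) (M : SL2Z) : 0 < cA a b c M := by
  refine QA_pos ha hd ?_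
  by_contra h
  push Not at h
  have := det_eq M
  rw [h.1, h.2] at this
  simp at this

lemma cC_pos (ha : 0 < a) (hd : b ^ 2 - 4 * a * c < 0) (M : SL2Z) : 0 < cC a b c M := by
  refine QA_pos ha hd ?_
  by_contra h
  push Not at h
  have := det_eq M
  rw [h.1, h.2] at this
  simp at this

lemma cB_ne (ha : 0 < a) (hd : b ^ 2 - 4 * a * c < 0)
    (hre : ∀ M : SL2Z, (moeb M (cmPoint a b c)).re ≠ 0) (M : SL2Z) : cB a b c M ≠ 0 := by
  intro hB
  refine hre M⁻¹ ?_
  have haR : (0 : ℝ) < a := by exact_mod_cast ha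
  set S := Real.sqrt (((b ^ 2 - 4 * a * c).natAbs : ℝ)) with hS
  have hS2 : S ^ 2 = DD a b c := by rw [hS, Real.sq_sqrt (by positivity), DD_natAbs hd]
  have hτ : cmPoint a b c = ⟨-b / (2 * a), S / (2 * a)⟩ := by
    unfold cmPoint
    rw [← hS]
    have e : (2 * (a : ℂ)) = ((2 * a : ℝ) : ℂ) := by push_cast; ring
    rw [e]
    apply Complex.ext
    · rw [Complex.div_ofReal_re]; simp
    · rw [Complex.div_ofReal_im]; simp
  unfold moeb
  rw [Matrix.SpecialLinearGroup.SL2_inv_expl, hτ, Complex.div_re, ← add_div]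
  simp
  left
  have hBR : (2 * a * (M.1 0 0) * (M.1 0 1) + b * ((M.1 0 0) * (M.1 1 1) + (M.1 0 1) * (M.1 1 0)) +
     2 * c * (M.1 1 0) * (M.1 1 1) : ℝ) = 0 := by exact_mod_cast hB
  field_simp
  unfold DD at hS2
  linear_combination (-(M.1 1 1 * M.1 1 0 : ℝ)) * hS2 - 2 * a * hBR

/-- scaled centre -/
def xM (a b c : ℤ) (M : SL2Z) : ℝ := cB a b c M / (2 * cA a b c M)
/-- scaled height -/
def vA (a b c : ℤ) (A : ℤ) : ℝ := Real.sqrt (DD a b c) / (2 * A)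

lemma qf_eq (ha : 0 < a) (hd : b ^ 2 - 4 * a * c < 0) (M : SL2Z) (u : ℝ) :
    qfC a b c ((M.1 0 0 : ℂ) * (u * I) + (M.1 0 1 : ℂ)) ((M.1 1 0 : ℂ) * (u * I) + (M.1 1 1 : ℂ)) =
      (cA a b c M : ℂ) * EE (xM a b c M) (vA a b c (cA a b c M)) u := by
  have hA : (cA a b c M : ℂ) ≠ 0 := by exact_mod_cast (cA_pos ha hd M).ne'
  have hS : ((Real.sqrt (DD a b c) : ℝ) : ℂ) ^ 2 = 4 * cA a b c M * cC a b c M - cB a b c M ^ 2 := by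
    rw [← ofReal_pow, Real.sq_sqrt (DD_pos hd).le]
    unfold DD
    push_cast
    have := congrArg (fun z : ℤ => (z : ℂ)) (cdisc (a := a) (b := b) (c := c) M)
    push_cast at this
    linear_combination this
  have e : (cA a b c M : ℂ) * EE (xM a b c M) (vA a b c (cA a b c M)) u
      = cC a b c M + cB a b c M * (u * I) + cA a b c M * (u * I) ^ 2 := by
    unfold EE xM vA
    push_cast
    field_simp
    rw [hS]
    ring
  rw [e]
  unfold qfC cA cB cC QA
  push_cast
  ring

lemma xM_sq (ha : 0 < a) (hd : b ^ 2 - 4 * a * c < 0) (M : SL2Z) :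
    (cA a b c M : ℝ) * (xM a b c M ^ 2 + vA a b c (cA a b c M) ^ 2) = cC a b c M := by
  have hA : (cA a b c M : ℝ) ≠ 0 := by exact_mod_cast (cA_pos ha hd M).ne'
  have h := congrArg (fun z : ℤ => (z : ℝ)) (cdisc (a := a) (b := b) (c := c) M)
  push_cast at h
  unfold xM vA
  rw [div_pow, div_pow, Real.sq_sqrt (DD_pos hd).le]
  unfold DD
  field_simp
  linear_combination h

lemma xM_ne (ha : 0 < a) (hd : b ^ 2 - 4 * a * c < 0)
    (hre : ∀ M : SL2Z, (moeb M (cmPoint a b c)).re ≠ 0) (M : SL2Z) : xM a b c M ≠ 0 := by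
  have hA : (cA a b c M : ℝ) ≠ 0 := by exact_mod_cast (cA_pos ha hd M).ne'
  have hB : (cB a b c M : ℝ) ≠ 0 := by exact_mod_cast cB_ne ha hd hre M
  unfold xM
  positivity

lemma vA_le (ha : 0 < a) (hd : b ^ 2 - 4 * a * c < 0)
    (hre : ∀ M : SL2Z, (moeb M (cmPoint a b c)).re ≠ 0) (M : SL2Z) :
    vA a b c (cA a b c M) ^ 2 ≤ DD a b c * xM a b c M ^ 2 := by
  have hD := DD_pos hd
  have hB : (1 : ℝ) ≤ (cB a b c M : ℝ) ^ 2 := by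
    have h := cB_ne ha hd hre M
    have : (1 : ℤ) ≤ cB a b c M ^ 2 := by
      have h2 : 0 < cB a b c M ^ 2 := by positivity
      omega
    exact_mod_cast this
  unfold vA xM
  rw [div_pow, div_pow, Real.sq_sqrt hD.le, mul_div_assoc']
  gcongr
  nlinarith

/-- base point of a coset -/
def x0 (a b c : ℤ) (p : CP) : ℝ := xM a b c (mkM (p, 0))

lemma cA_mk (p : CP) (n : ℤ) : cA a b c (mkM (p, n)) = QA a b c p.1.1 p.1.2 := by
  simp [cA, mkM]

lemma xM_mk (ha : 0 < a) (hd : b ^ 2 - 4 * a * c < 0) (p : CP) (n : ℤ) :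
    xM a b c (mkM (p, n)) = n + x0 a b c p := by
  have hA : (QA a b c p.1.1 p.1.2 : ℝ) ≠ 0 := by exact_mod_cast (QA_pos ha hd (CP_ne p)).ne'
  unfold x0 xM
  rw [cA_mk, cA_mk]
  field_simp
  unfold cB QA
  simp [mkM]
  ring

end arith

/-! ### Dominated summation over the group -/

lemma dom {k : ℕ} (hk : 2 ≤ k) {A C u T : ℝ} (hA : 1 ≤ A) (hC : 1 ≤ C) (hu : 0 < u) (huT : u ≤ T)
    (hT : 1 ≤ T) :
    u ^ (2 * k - 2) * ((C + A * u ^ 2) ^ k)⁻¹ ≤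
      T ^ (2 * k) * u ^ (-(1 / 2) : ℝ) * (A + C) ^ (-(5 / 4) : ℝ) := by
  obtain ⟨m, rfl⟩ : ∃ m, k = m + 2 := ⟨k - 2, by omega⟩
  have hN : 1 ≤ C + A * u ^ 2 := by nlinarith [sq_nonneg u]
  set N := C + A * u ^ 2 with hNd
  have hN0 : 0 < N := by linarith
  have hAC : 0 < A + C := by linarith
  have e1 : 2 * (m + 2) - 2 = 2 * m + 2 := by omega
  rw [e1]
  have hu12 : 0 < u ^ (1 / 2 : ℝ) := by positivity
  have hAC54 : 0 < (A + C) ^ (5 / 4 : ℝ) := by positivity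
  rw [Real.rpow_neg hu.le, Real.rpow_neg hAC.le, ← div_eq_mul_inv, ← div_eq_mul_inv, ← div_eq_mul_inv,
    div_div, div_le_div_iff₀ (by positivity) (by positivity)]
  have hT1 : 1 ≤ T ^ (2 * (m + 2)) := one_le_pow₀ hT
  have hNk : N ^ (5 / 4 : ℝ) ≤ N ^ (m + 2) := by
    rw [← Real.rpow_natCast]
    apply Real.rpow_le_rpow_of_exponent_le hN
    push_cast
    have : (0 : ℝ) ≤ m := by positivity
    linarith
  rcases le_total u 1 with h1 | h1
  · have h2 : u ^ 2 * (A + C) ≤ N := by nlinarith [mul_nonneg hu.le (sub_nonneg.2 h1)]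
    have h3 : (u ^ 2 * (A + C)) ^ (5 / 4 : ℝ) ≤ N ^ (5 / 4 : ℝ) :=
      Real.rpow_le_rpow (by positivity) h2 (by norm_num)
    rw [Real.mul_rpow (by positivity) hAC.le] at h3
    have h4 : u ^ (2 * m + 2) * u ^ (1 / 2 : ℝ) ≤ (u ^ 2) ^ (5 / 4 : ℝ) := by
      rw [← Real.rpow_natCast, ← Real.rpow_natCast, ← Real.rpow_add hu, ← Real.rpow_mul hu.le]
      apply Real.rpow_le_rpow_of_exponent_ge hu h1
      push_cast
      have : (0 : ℝ) ≤ m := by positivity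
      linarith
    calc u ^ (2 * m + 2) * (u ^ (1 / 2 : ℝ) * (A + C) ^ (5 / 4 : ℝ))
        = u ^ (2 * m + 2) * u ^ (1 / 2 : ℝ) * (A + C) ^ (5 / 4 : ℝ) := by ring
      _ ≤ (u ^ 2) ^ (5 / 4 : ℝ) * (A + C) ^ (5 / 4 : ℝ) := by gcongr
      _ ≤ N ^ (m + 2) := h3.trans hNk
      _ ≤ T ^ (2 * (m + 2)) * N ^ (m + 2) := le_mul_of_one_le_left (by positivity) hT1
  · have h2 : A + C ≤ N := by
      have : 1 ≤ u ^ 2 := one_le_pow₀ h1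
      nlinarith
    have h3 : (A + C) ^ (5 / 4 : ℝ) ≤ N ^ (5 / 4 : ℝ) :=
      Real.rpow_le_rpow (by positivity) h2 (by norm_num)
    have h4 : u ^ (2 * m + 2) * u ^ (1 / 2 : ℝ) ≤ T ^ (2 * (m + 2)) := by
      calc u ^ (2 * m + 2) * u ^ (1 / 2 : ℝ) ≤ u ^ (2 * (m + 2)) := by
            rw [← Real.rpow_natCast, ← Real.rpow_natCast, ← Real.rpow_add hu]
            apply Real.rpow_le_rpow_of_exponent_le h1
            push_cast
            linarith
        _ ≤ _ := by gcongr
    calc u ^ (2 * m + 2) * (u ^ (1 / 2 : ℝ) * (A + C) ^ (5 / 4 : ℝ))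
        = u ^ (2 * m + 2) * u ^ (1 / 2 : ℝ) * (A + C) ^ (5 / 4 : ℝ) := by ring
      _ ≤ T ^ (2 * (m + 2)) * N ^ (m + 2) := by gcongr; exact h3.trans hNk

lemma coset_inv_sum (x₀ : ℝ) : Summable (fun n : ℤ => (1 + ((n : ℝ) + x₀) ^ 2)⁻¹) ∧
    ∑' n : ℤ, (1 + ((n : ℝ) + x₀) ^ 2)⁻¹ ≤ 3 * π := by
  have hi : Integrable (fun t : ℝ => 3 * (1 + (t + x₀) ^ 2)⁻¹) :=
    ((integrable_inv_one_add_sq).comp_add_right x₀).const_mul 3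
  have hb : ∀ t : ℝ, (1 + ((⌊t⌋ : ℝ) + x₀) ^ 2)⁻¹ ≤ 3 * (1 + (t + x₀) ^ 2)⁻¹ := by
    intro t
    have := floor_bound 1 x₀ t le_rfl
    simpa using this
  have hf : Integrable (fun t : ℝ => (1 + ((⌊t⌋ : ℝ) + x₀) ^ 2)⁻¹) := by
    refine hi.mono' ?_ (Eventually.of_forall fun t => ?_)
    · have hm : Measurable (fun t : ℝ => (1 + ((⌊t⌋ : ℝ) + x₀) ^ 2)⁻¹) := by fun_prop
      exact hm.aestronglyMeasurable
    · rw [Real.norm_of_nonneg (by positivity)]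
      exact hb t
  have h := hasSum_floor (fun n : ℤ => (1 + ((n : ℝ) + x₀) ^ 2)⁻¹) hf
  refine ⟨h.summable, ?_⟩
  rw [h.tsum_eq]
  calc _ ≤ ∫ t : ℝ, 3 * (1 + (t + x₀) ^ 2)⁻¹ := integral_mono hf hi hb
    _ = 3 * π := by
      rw [integral_const_mul, integral_add_right_eq_self (fun t : ℝ => (1 + t ^ 2)⁻¹) x₀,
        integral_univ_inv_one_add_sq]

section arith2
variable {a b c : ℤ}

/-- the parametrisation as an equivalence -/
def eqM : CP × ℤ ≃ SL2Z := Equiv.ofBijective mkM mkM_bijective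

lemma eqM_apply (q : CP × ℤ) : eqM q = mkM q := rfl

lemma summable_AC (ha : 0 < a) (hd : b ^ 2 - 4 * a * c < 0) :
    Summable (fun M : SL2Z => ((cA a b c M : ℝ) + cC a b c M) ^ (-(5 / 4) : ℝ)) := by
  rw [← eqM.summable_iff]
  have key : Summable (fun q : CP × ℤ => (QA a b c q.1.1.1 q.1.1.2 : ℝ) ^ (-(5 / 4) : ℝ) *
      (1 + ((q.2 : ℝ) + x0 a b c q.1) ^ 2)⁻¹) := by
    rw [summable_prod_of_nonneg]
    · constructor
      · intro p
        exact (coset_inv_sum (x0 a b c p)).1.mul_left ((QA a b c p.1.1 p.1.2 : ℝ) ^ (-(5 / 4) : ℝ))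
      · refine Summable.of_nonneg_of_le (fun p => ?_) (fun p => ?_)
          ((summable_QA ha hd).mul_right (3 * π))
        · refine tsum_nonneg fun n => ?_
          have := QA_CP_ge ha hd p
          positivity
        · simp only
          rw [tsum_mul_left]
          have := QA_CP_ge ha hd p
          gcongr
          exact (coset_inv_sum (x0 a b c p)).2
    · intro q
      have := QA_CP_ge ha hd q.1
      simp only [Pi.zero_apply]
      positivity
  refine Summable.of_nonneg_of_le (fun q => ?_) (fun q => ?_) key
  · have h1 : (0 : ℝ) < cA a b c (eqM q) := by exact_mod_cast cA_pos ha hd _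
    have h2 : (0 : ℝ) < cC a b c (eqM q) := by exact_mod_cast cC_pos ha hd _
    simp only [Function.comp]
    positivity
  · obtain ⟨p, n⟩ := q
    simp only [Function.comp, eqM_apply]
    rw [← xM_sq ha hd, xM_mk ha hd, cA_mk]
    have hq := QA_CP_ge ha hd p
    set Q := (QA a b c p.1.1 p.1.2 : ℝ)
    set x := (n : ℝ) + x0 a b c p
    set v := vA a b c (QA a b c p.1.1 p.1.2)
    have hx : 1 ≤ 1 + x ^ 2 := by nlinarith [sq_nonneg x]
    calc (Q + Q * (x ^ 2 + v ^ 2)) ^ (-(5 / 4) : ℝ) ≤ (Q * (1 + x ^ 2)) ^ (-(5 / 4) : ℝ) := by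
          apply Real.rpow_le_rpow_of_nonpos (by positivity) _ (by norm_num)
          nlinarith [mul_nonneg (by linarith : (0 : ℝ) ≤ Q) (sq_nonneg v)]
      _ = Q ^ (-(5 / 4) : ℝ) * (1 + x ^ 2) ^ (-(5 / 4) : ℝ) := Real.mul_rpow (by linarith) (by linarith)
      _ ≤ Q ^ (-(5 / 4) : ℝ) * (1 + x ^ 2)⁻¹ := by
          gcongr
          rw [← Real.rpow_neg_one]
          exact Real.rpow_le_rpow_of_exponent_le hx (by norm_num)

end arith2

/-! ### The termwise integration -/

section core
variable {a b c : ℤ}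

/-- one term of the series, including the monomial factor -/
def FM (k : ℕ) (a b c : ℤ) (M : SL2Z) (u : ℝ) : ℂ :=
  ((((cA a b c M : ℝ) ^ k)⁻¹ : ℝ) : ℂ) * WW k (xM a b c M) (vA a b c (cA a b c M)) u

/-- the full series -/
def GG (k : ℕ) (a b c : ℤ) (u : ℝ) : ℂ := ∑' M : SL2Z, FM k a b c M u

instance : Countable SL2Z := (mkM_bijective.2).countable

lemma cA_one_le (ha : 0 < a) (hd : b ^ 2 - 4 * a * c < 0) (M : SL2Z) : (1 : ℝ) ≤ cA a b c M := by
  exact_mod_cast cA_pos ha hd M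

lemma cC_one_le (ha : 0 < a) (hd : b ^ 2 - 4 * a * c < 0) (M : SL2Z) : (1 : ℝ) ≤ cC a b c M := by
  exact_mod_cast cC_pos ha hd M

lemma FM_bound {k : ℕ} (hk : 2 ≤ k) (ha : 0 < a) (hd : b ^ 2 - 4 * a * c < 0)
    (hre : ∀ M : SL2Z, (moeb M (cmPoint a b c)).re ≠ 0) (M : SL2Z) {u T : ℝ} (hu : 0 < u)
    (huT : u ≤ T) (hT : 1 ≤ T) :
    ‖FM k a b c M u‖ ≤ (1 + DD a b c) ^ k * T ^ (2 * k) * u ^ (-(1 / 2) : ℝ) *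
      ((cA a b c M : ℝ) + cC a b c M) ^ (-(5 / 4) : ℝ) := by
  have hA := cA_one_le ha hd M
  have hC := cC_one_le ha hd M
  have hD := DD_pos hd
  have h1 := EE_inv_bound k (DD a b c) (xM a b c M) (vA a b c (cA a b c M)) u (vA_le ha hd hre M) hD.le
    (xM_ne ha hd hre M)
  have h2 := dom hk hA hC hu huT hT
  have h3 := xM_sq ha hd M
  set A := (cA a b c M : ℝ)
  set C := (cC a b c M : ℝ)
  set x := xM a b c M
  set v := vA a b c (cA a b c M)
  have h4 : C + A * u ^ 2 = A * (x ^ 2 + v ^ 2 + u ^ 2) := by rw [← h3]; ring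
  unfold FM WW
  rw [norm_mul, norm_mul, even_pow_norm, Complex.norm_real, Real.norm_of_nonneg (by positivity)]
  calc (A ^ k)⁻¹ * (u ^ (2 * k - 2) * ‖(EE x v u ^ k)⁻¹‖)
      ≤ (A ^ k)⁻¹ * (u ^ (2 * k - 2) * ((1 + DD a b c) ^ k * ((x ^ 2 + v ^ 2 + u ^ 2) ^ k)⁻¹)) := by
        gcongr
    _ = (1 + DD a b c) ^ k * (u ^ (2 * k - 2) * ((C + A * u ^ 2) ^ k)⁻¹) := by
        rw [h4, mul_pow, mul_inv]; ring
    _ ≤ (1 + DD a b c) ^ k * (T ^ (2 * k) * u ^ (-(1 / 2) : ℝ) * (A + C) ^ (-(5 / 4) : ℝ)) := by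
        gcongr
    _ = _ := by ring

lemma FM_summable {k : ℕ} (hk : 2 ≤ k) (ha : 0 < a) (hd : b ^ 2 - 4 * a * c < 0)
    (hre : ∀ M : SL2Z, (moeb M (cmPoint a b c)).re ≠ 0) {u : ℝ} (hu : 0 < u) :
    Summable (fun M => FM k a b c M u) := by
  refine Summable.of_norm_bounded ((summable_AC ha hd).mul_left _) (fun M =>
    FM_bound hk ha hd hre M hu (le_max_right 1 u) (le_max_left 1 u))

lemma FM_continuous {k : ℕ} (ha : 0 < a) (hd : b ^ 2 - 4 * a * c < 0)
    (hre : ∀ M : SL2Z, (moeb M (cmPoint a b c)).re ≠ 0) (M : SL2Z) : Continuous (FM k a b c M) :=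
  continuous_const.mul (WW_continuous k (xM_ne ha hd hre M))

lemma FM_integrable {k : ℕ} (hk : 2 ≤ k) (ha : 0 < a) (hd : b ^ 2 - 4 * a * c < 0)
    (hre : ∀ M : SL2Z, (moeb M (cmPoint a b c)).re ≠ 0) (M : SL2Z) : Integrable (FM k a b c M) :=
  (WW_integrable (by omega) (xM_ne ha hd hre M)).const_mul _

lemma GG_bound {k : ℕ} (hk : 2 ≤ k) (ha : 0 < a) (hd : b ^ 2 - 4 * a * c < 0)
    (hre : ∀ M : SL2Z, (moeb M (cmPoint a b c)).re ≠ 0) {u T : ℝ} (hu : 0 < u)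
    (huT : u ≤ T) (hT : 1 ≤ T) :
    ‖GG k a b c u‖ ≤ (1 + DD a b c) ^ k * T ^ (2 * k) * u ^ (-(1 / 2) : ℝ) *
      ∑' M : SL2Z, ((cA a b c M : ℝ) + cC a b c M) ^ (-(5 / 4) : ℝ) := by
  rw [← tsum_mul_left]
  exact tsum_of_norm_bounded ((summable_AC ha hd).mul_left _).hasSum
    (fun M => FM_bound hk ha hd hre M hu huT hT)

lemma GG_meas {k : ℕ} (hk : 2 ≤ k) (ha : 0 < a) (hd : b ^ 2 - 4 * a * c < 0)
    (hre : ∀ M : SL2Z, (moeb M (cmPoint a b c)).re ≠ 0) :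
    AEStronglyMeasurable (GG k a b c) (volume.restrict (Set.Ioi 0)) := by
  refine aestronglyMeasurable_of_tendsto_ae (atTop : Filter (Finset SL2Z))
    (f := fun s u => ∑ M ∈ s, FM k a b c M u) (fun s => ?_) ?_
  · exact (continuous_finsetSum s fun M _ => FM_continuous ha hd hre M).aestronglyMeasurable
  · filter_upwards [ae_restrict_mem measurableSet_Ioi] with u hu
    exact (FM_summable hk ha hd hre hu).hasSum

lemma rpow_half_int (T : ℝ) (hT : 0 ≤ T) :
    IntegrableOn (fun u : ℝ => u ^ (-(1 / 2) : ℝ)) (Set.Ioc 0 T) := by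
  have := intervalIntegral.intervalIntegrable_rpow' (a := 0) (b := T) (r := -(1 / 2)) (by norm_num)
  rwa [intervalIntegrable_iff_integrableOn_Ioc_of_le hT] at this

lemma GG_int_Ioc {k : ℕ} (hk : 2 ≤ k) (ha : 0 < a) (hd : b ^ 2 - 4 * a * c < 0)
    (hre : ∀ M : SL2Z, (moeb M (cmPoint a b c)).re ≠ 0) {T : ℝ} (hT : 1 ≤ T) :
    IntegrableOn (GG k a b c) (Set.Ioc 0 T) := by
  have h := (((rpow_half_int T (by linarith)).const_mul ((1 + DD a b c) ^ k * T ^ (2 * k))).mul_const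
    (∑' M : SL2Z, ((cA a b c M : ℝ) + cC a b c M) ^ (-(5 / 4) : ℝ)))
  refine Integrable.mono' h ((GG_meas hk ha hd hre).mono_set Set.Ioc_subset_Ioi_self) ?_
  filter_upwards [ae_restrict_mem measurableSet_Ioc] with u hu
  exact GG_bound hk ha hd hre hu.1 hu.2 hT

lemma FM_re_int {k : ℕ} (hk : 2 ≤ k) (ha : 0 < a) (hd : b ^ 2 - 4 * a * c < 0)
    (hre : ∀ M : SL2Z, (moeb M (cmPoint a b c)).re ≠ 0) (M : SL2Z) {T : ℝ} (hT : 1 ≤ T) :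
    (∫ u in Set.Ioc 0 T, FM k a b c M u).re =
      -(((cA a b c M : ℝ) ^ k)⁻¹ * psi k (xM a b c M) (vA a b c (cA a b c M)) T) := by
  have hx := xM_ne ha hd hre M
  have hW := WW_integrable (k := k) (v := vA a b c (cA a b c M)) (by omega) hx
  have h0 := WW_re_integral_zero (k := k) (v := vA a b c (cA a b c M)) (by omega) hx
  have hWr : Integrable (fun u => (WW k (xM a b c M) (vA a b c (cA a b c M)) u).re) := hW.re
  have hT0 : (0 : ℝ) ≤ T := by linarith
  rw [← Set.Ioc_union_Ioi_eq_Ioi hT0, setIntegral_union (Set.Ioc_disjoint_Ioi le_rfl) measurableSet_Ioi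
    hWr.integrableOn hWr.integrableOn] at h0
  have h1 : ∫ u in Set.Ioc 0 T, FM k a b c M u = ((((cA a b c M : ℝ) ^ k)⁻¹ : ℝ) : ℂ) *
      ∫ u in Set.Ioc 0 T, WW k (xM a b c M) (vA a b c (cA a b c M)) u := by
    unfold FM
    exact integral_const_mul _ _
  have h2 : (∫ u in Set.Ioc 0 T, WW k (xM a b c M) (vA a b c (cA a b c M)) u).re =
      ∫ u in Set.Ioc 0 T, (WW k (xM a b c M) (vA a b c (cA a b c M)) u).re :=
    (integral_re (𝕜 := ℂ) hW.integrableOn).symm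
  rw [h1, Complex.re_ofReal_mul, h2]
  unfold psi
  rw [eq_neg_of_add_eq_zero_left h0]
  ring

lemma GG_hasSum_Ioc {k : ℕ} (hk : 2 ≤ k) (ha : 0 < a) (hd : b ^ 2 - 4 * a * c < 0)
    (hre : ∀ M : SL2Z, (moeb M (cmPoint a b c)).re ≠ 0) {T : ℝ} (hT : 1 ≤ T) :
    HasSum (fun M => -(((cA a b c M : ℝ) ^ k)⁻¹ * psi k (xM a b c M) (vA a b c (cA a b c M)) T))
      (∫ u in Set.Ioc 0 T, GG k a b c u).re := by
  have hs : Summable fun M => ∫ u in Set.Ioc 0 T, ‖FM k a b c M u‖ := by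
    refine Summable.of_nonneg_of_le (fun M => integral_nonneg fun _ => norm_nonneg _) (fun M => ?_)
      ((summable_AC ha hd).mul_left (∫ u in Set.Ioc 0 T, (1 + DD a b c) ^ k * T ^ (2 * k) * u ^ (-(1 / 2) : ℝ)))
    rw [← integral_mul_const]
    refine setIntegral_mono_on (FM_integrable hk ha hd hre M).norm.integrableOn
      (((rpow_half_int T (by linarith)).const_mul ((1 + DD a b c) ^ k * T ^ (2 * k))).mul_const _)
      measurableSet_Ioc (fun u hu => FM_bound hk ha hd hre M hu.1 hu.2 hT)
  have h := hasSum_integral_of_summable_integral_norm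
    (fun M => (FM_integrable hk ha hd hre M).integrableOn (s := Set.Ioc 0 T)) hs
  have h2 := Complex.hasSum_re h
  simp only [FM_re_int hk ha hd hre _ hT] at h2
  exact h2

end core

/-! ### Passage to the limit -/

section core2
variable {a b c : ℤ}

lemma summable_QAk {k : ℕ} (hk : 2 ≤ k) (ha : 0 < a) (hd : b ^ 2 - 4 * a * c < 0) :
    Summable (fun p : CP => ((QA a b c p.1.1 p.1.2 : ℝ) ^ k)⁻¹) := by
  refine Summable.of_nonneg_of_le (fun p => ?_) (fun p => ?_) (summable_QA ha hd)
  · have := QA_CP_ge ha hd p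
    positivity
  · have h := QA_CP_ge ha hd p
    rw [← Real.rpow_natCast, ← Real.rpow_neg (by linarith)]
    apply Real.rpow_le_rpow_of_exponent_le h
    have : (2 : ℝ) ≤ k := by exact_mod_cast hk
    linarith

lemma FM_mk {k : ℕ} (ha : 0 < a) (hd : b ^ 2 - 4 * a * c < 0) (p : CP) (n : ℤ) (u : ℝ) :
    FM k a b c (mkM (p, n)) u = ((((QA a b c p.1.1 p.1.2 : ℝ) ^ k)⁻¹ : ℝ) : ℂ) *
      ((u : ℂ) ^ (2 * k - 2) * (EE (n + x0 a b c p) (vA a b c (QA a b c p.1.1 p.1.2)) u ^ k)⁻¹) := by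
  unfold FM WW
  rw [cA_mk, xM_mk ha hd]

lemma GG_decay {k : ℕ} (hk : 2 ≤ k) (ha : 0 < a) (hd : b ^ 2 - 4 * a * c < 0)
    (hre : ∀ M : SL2Z, (moeb M (cmPoint a b c)).re ≠ 0) {u : ℝ} (hu1 : 1 ≤ u)
    (hu2 : Real.sqrt (DD a b c) ≤ u) :
    ‖GG k a b c u‖ ≤ (∑' p : CP, ((QA a b c p.1.1 p.1.2 : ℝ) ^ k)⁻¹) *
      (6 * k * 4 ^ (k + 1) * π) * u ^ (-2 : ℝ) := by
  have hu : 0 < u := by linarith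
  have hs : Summable (fun q : CP × ℤ => FM k a b c (mkM q) u) :=
    (eqM.summable_iff).2 (FM_summable hk ha hd hre hu)
  have e : GG k a b c u = ∑' p : CP, ∑' n : ℤ, FM k a b c (mkM (p, n)) u := by
    rw [← hs.tsum_prod]
    exact (eqM.tsum_eq (fun M => FM k a b c M u)).symm
  rw [e, mul_assoc, ← tsum_mul_right]
  refine tsum_of_norm_bounded ((summable_QAk hk ha hd).mul_right _).hasSum (fun p => ?_)
  simp only [FM_mk ha hd]
  rw [tsum_mul_left, tsum_mul_left, norm_mul, norm_mul, even_pow_norm, Complex.norm_real]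
  have hA := QA_CP_ge ha hd p
  rw [Real.norm_of_nonneg (by positivity)]
  have hv : 2 * |vA a b c (QA a b c p.1.1 p.1.2)| ≤ u := by
    unfold vA
    rw [abs_of_nonneg (by positivity)]
    have : Real.sqrt (DD a b c) / (2 * (QA a b c p.1.1 p.1.2 : ℝ)) ≤ Real.sqrt (DD a b c) / 2 := by
      apply div_le_div_of_nonneg_left (Real.sqrt_nonneg _) (by norm_num) (by linarith)
    linarith
  have h := coset_decay (k := k) (by omega) (x0 a b c p) hv hu1
  have e2 : u ^ (-2 : ℝ) = u ^ (2 * k - 2) * (u ^ (2 * k))⁻¹ := by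
    obtain ⟨m, rfl⟩ : ∃ m, k = m + 1 := ⟨k - 1, by omega⟩
    rw [Real.rpow_neg hu.le, show 2 * (m + 1) - 2 = 2 * m by omega]
    have : u ^ (2 : ℝ) = u ^ 2 := by exact_mod_cast Real.rpow_natCast u 2
    rw [this]
    field_simp
    ring
  rw [e2]
  calc _ ≤ ((QA a b c p.1.1 p.1.2 : ℝ) ^ k)⁻¹ *
        (u ^ (2 * k - 2) * (6 * k * 4 ^ (k + 1) * π * (u ^ (2 * k))⁻¹)) := by gcongr
    _ = _ := by ring

lemma GG_integrable {k : ℕ} (hk : 2 ≤ k) (ha : 0 < a) (hd : b ^ 2 - 4 * a * c < 0)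
    (hre : ∀ M : SL2Z, (moeb M (cmPoint a b c)).re ≠ 0) :
    IntegrableOn (GG k a b c) (Set.Ioi 0) := by
  set T := max 1 (Real.sqrt (DD a b c)) with hTd
  have hT1 : 1 ≤ T := le_max_left _ _
  have hT0 : 0 < T := by linarith
  rw [← Set.Ioc_union_Ioi_eq_Ioi hT0.le]
  refine (GG_int_Ioc hk ha hd hre hT1).union ?_
  have h := (integrableOn_Ioi_rpow_of_lt (a := -2) (by norm_num) hT0).const_mul
    ((∑' p : CP, ((QA a b c p.1.1 p.1.2 : ℝ) ^ k)⁻¹) * (6 * k * 4 ^ (k + 1) * π))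
  refine Integrable.mono' h ((GG_meas hk ha hd hre).mono_set (Set.Ioi_subset_Ioi hT0.le)) ?_
  filter_upwards [ae_restrict_mem measurableSet_Ioi] with u hu
  have hu' : T < u := hu
  exact GG_decay hk ha hd hre (hT1.trans hu'.le) ((le_max_right _ _).trans hu'.le)

lemma GG_main {k : ℕ} (hk : 2 ≤ k) (ha : 0 < a) (hd : b ^ 2 - 4 * a * c < 0)
    (hre : ∀ M : SL2Z, (moeb M (cmPoint a b c)).re ≠ 0) :
    (∫ u in Set.Ioi 0, GG k a b c u).re =
      -((-1) ^ k * π / (2 * k - 1) * ∑' p : CP, ((QA a b c p.1.1 p.1.2 : ℝ) ^ k)⁻¹) := by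
  have hD := DD_pos hd
  have hx : ∀ (p : CP) (n : ℤ), (n : ℝ) + x0 a b c p ≠ 0 := by
    intro p n
    rw [← xM_mk ha hd]
    exact xM_ne ha hd hre _
  have hv : ∀ (p : CP) (n : ℤ), vA a b c (QA a b c p.1.1 p.1.2) ^ 2 ≤
      DD a b c * ((n : ℝ) + x0 a b c p) ^ 2 := by
    intro p n
    rw [← xM_mk ha hd, ← cA_mk p n]
    exact vA_le ha hd hre _
  have h1 : Tendsto (fun T : ℝ => (∫ u in (0 : ℝ)..T, GG k a b c u).re) atTop
      (𝓝 (∫ u in Set.Ioi 0, GG k a b c u).re) :=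
    (Complex.continuous_re.tendsto _).comp
      (intervalIntegral_tendsto_integral_Ioi 0 (GG_integrable hk ha hd hre) tendsto_id)
  have h2 : ∀ T : ℝ, 1 ≤ T → (∫ u in (0 : ℝ)..T, GG k a b c u).re =
      ∑' p : CP, -(((QA a b c p.1.1 p.1.2 : ℝ) ^ k)⁻¹ *
        ∑' n : ℤ, psi k (n + x0 a b c p) (vA a b c (QA a b c p.1.1 p.1.2)) T) := by
    intro T hT
    rw [intervalIntegral.integral_of_le (by linarith)]
    have hs := GG_hasSum_Ioc hk ha hd hre hT
    have hs2 := (eqM.hasSum_iff).2 hs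
    rw [← hs2.tsum_eq, hs2.summable.tsum_prod]
    refine tsum_congr fun p => ?_
    simp only [Function.comp, eqM_apply, cA_mk, xM_mk ha hd]
    rw [tsum_neg, tsum_mul_left]
  have h3 : Tendsto (fun T : ℝ => ∑' p : CP, -(((QA a b c p.1.1 p.1.2 : ℝ) ^ k)⁻¹ *
        ∑' n : ℤ, psi k (n + x0 a b c p) (vA a b c (QA a b c p.1.1 p.1.2)) T)) atTop
      (𝓝 (∑' p : CP, -(((QA a b c p.1.1 p.1.2 : ℝ) ^ k)⁻¹ * ((-1) ^ k * π / (2 * k - 1))))) := by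
    refine tendsto_tsum_of_dominated_convergence
      (bound := fun p : CP => ((QA a b c p.1.1 p.1.2 : ℝ) ^ k)⁻¹ * (6 * (1 + DD a b c) ^ k * π))
      ((summable_QAk hk ha hd).mul_right _) (fun p => ?_) ?_
    · exact ((coset_tendsto (by omega) hD.le (hx p) (hv p)).const_mul _).neg
    · filter_upwards [eventually_ge_atTop (1 : ℝ)] with T hT p
      have hA := QA_CP_ge ha hd p
      rw [norm_neg, norm_mul, Real.norm_of_nonneg (by positivity : 0 ≤ ((QA a b c p.1.1 p.1.2 : ℝ) ^ k)⁻¹)]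
      gcongr
      exact coset_bound (by omega) hD.le (hx p) (hv p) hT
  have h4 := tendsto_nhds_unique h1 (h3.congr' (by
    filter_upwards [eventually_ge_atTop (1 : ℝ)] with T hT
    exact (h2 T hT).symm))
  rw [h4, tsum_neg, tsum_mul_right]
  ring

end core2

/-! ### Periods and zeta factorisation -/

section fin
variable {a b c : ℤ}

/-- the bare series -/
def SS (k : ℕ) (a b c : ℤ) (y : ℝ) : ℂ :=
  ∑' M : SL2Z, (qfC a b c ((M.1 0 0 : ℂ) * ((y : ℂ) * Complex.I) + (M.1 0 1 : ℂ))
      ((M.1 1 0 : ℂ) * ((y : ℂ) * Complex.I) + (M.1 1 1 : ℂ))) ^ (-(k : ℤ))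

lemma SS_mul {k : ℕ} (ha : 0 < a) (hd : b ^ 2 - 4 * a * c < 0) (y : ℝ) :
    SS k a b c y * (y : ℂ) ^ (2 * k - 2) = GG k a b c y := by
  unfold SS GG
  rw [← tsum_mul_right]
  refine tsum_congr fun M => ?_
  rw [qf_eq ha hd M y]
  unfold FM WW
  rw [zpow_neg, zpow_natCast, mul_pow, mul_inv]
  push_cast
  ring

/-- the inversion matrix -/
def Smat : SL2Z := ⟨!![0, 1; -1, 0], by simp [Matrix.det_fin_two_of]⟩

lemma SS_inv (k : ℕ) (a b c : ℤ) {y : ℝ} (hy : 0 < y) :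
    SS k a b c y⁻¹ = (-1) ^ k * (y : ℂ) ^ (2 * k) * SS k a b c y := by
  have hy0 : (y : ℂ) ≠ 0 := by exact_mod_cast hy.ne'
  unfold SS
  rw [← tsum_mul_left]
  rw [← (Equiv.mulRight Smat).tsum_eq (fun M : SL2Z => (-1) ^ k * (y : ℂ) ^ (2 * k) * (qfC a b c ((M.1 0 0 : ℂ) * ((y : ℂ) * Complex.I) + (M.1 0 1 : ℂ))
      ((M.1 1 0 : ℂ) * ((y : ℂ) * Complex.I) + (M.1 1 1 : ℂ))) ^ (-(k : ℤ)))]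
  refine tsum_congr fun M => ?_
  have e00 : ((Equiv.mulRight Smat) M).1 0 0 = -M.1 0 1 := by
    change (M.1 * (!![0, 1; -1, 0] : Matrix (Fin 2) (Fin 2) ℤ)) 0 0 = _
    simp [Matrix.mul_apply, Fin.sum_univ_two]
  have e01 : ((Equiv.mulRight Smat) M).1 0 1 = M.1 0 0 := by
    change (M.1 * (!![0, 1; -1, 0] : Matrix (Fin 2) (Fin 2) ℤ)) 0 1 = _
    simp [Matrix.mul_apply, Fin.sum_univ_two]
  have e10 : ((Equiv.mulRight Smat) M).1 1 0 = -M.1 1 1 := by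
    change (M.1 * (!![0, 1; -1, 0] : Matrix (Fin 2) (Fin 2) ℤ)) 1 0 = _
    simp [Matrix.mul_apply, Fin.sum_univ_two]
  have e11 : ((Equiv.mulRight Smat) M).1 1 1 = M.1 1 0 := by
    change (M.1 * (!![0, 1; -1, 0] : Matrix (Fin 2) (Fin 2) ℤ)) 1 1 = _
    simp [Matrix.mul_apply, Fin.sum_univ_two]
  rw [e00, e01, e10, e11]
  have key : qfC a b c ((M.1 0 0 : ℂ) * (((y⁻¹ : ℝ) : ℂ) * Complex.I) + (M.1 0 1 : ℂ))
      ((M.1 1 0 : ℂ) * (((y⁻¹ : ℝ) : ℂ) * Complex.I) + (M.1 1 1 : ℂ)) =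
      (-1) * ((y : ℂ) ^ 2)⁻¹ * qfC a b c (((-M.1 0 1 : ℤ) : ℂ) * ((y : ℂ) * Complex.I) + (M.1 0 0 : ℂ))
      (((-M.1 1 1 : ℤ) : ℂ) * ((y : ℂ) * Complex.I) + (M.1 1 0 : ℂ)) := by
    unfold qfC
    push_cast
    field_simp
    have hI : Complex.I ^ 2 = -1 := Complex.I_sq
    ring_nf
    rw [hI]
    ring
  rw [key, mul_zpow, mul_zpow, zpow_neg, zpow_natCast, zpow_neg ((y ^ 2 : ℂ)⁻¹), zpow_natCast, pow_mul,
    inv_pow, inv_inv]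
  congr 2
  rw [← inv_pow]
  norm_num

lemma SS_int (k : ℕ) (hk : 1 ≤ k) (a b c : ℤ) :
    ∫ y in Set.Ioi (0 : ℝ), SS k a b c y =
      (-1) ^ k * ∫ y in Set.Ioi (0 : ℝ), SS k a b c y * (y : ℂ) ^ (2 * k - 2) := by
  rw [← integral_comp_rpow_Ioi (SS k a b c) (p := -1) (by norm_num), ← integral_const_mul]
  refine setIntegral_congr_fun measurableSet_Ioi fun y hy => ?_
  have hy : 0 < y := hy
  have hy0 : (y : ℂ) ≠ 0 := by exact_mod_cast hy.ne'
  rw [Real.rpow_neg_one, SS_inv k a b c hy]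
  have : |(-1 : ℝ)| * y ^ ((-1 : ℝ) - 1) = (y ^ 2)⁻¹ := by
    rw [show ((-1 : ℝ) - 1) = -((2 : ℕ) : ℝ) by norm_num, Real.rpow_neg hy.le, Real.rpow_natCast]
    simp
  rw [this, Complex.real_smul]
  have e : (y : ℂ) ^ (2 * k) = y ^ 2 * y ^ (2 * k - 2) := by
    rw [← pow_add]; congr 1; omega
  rw [e]
  push_cast
  field_simp

/-- scaling of coprime pairs -/
def scl (q : ℕ × CP) : {p : ℤ × ℤ // p ≠ (0, 0)} :=
  ⟨(((q.1 : ℤ) + 1) * q.2.1.1, ((q.1 : ℤ) + 1) * q.2.1.2), by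
    intro h
    have h1 := congrArg Prod.fst h
    have h2 := congrArg Prod.snd h
    simp only at h1 h2
    have h3 : ((q.1 : ℤ) + 1) ≠ 0 := by positivity
    rcases CP_ne q.2 with h | h
    · exact mul_ne_zero h3 h h1
    · exact mul_ne_zero h3 h h2⟩

lemma scl_bij : Function.Bijective scl := by
  constructor
  · rintro ⟨n, p⟩ ⟨m, q⟩ h
    have h' := congrArg Subtype.val h
    have h1 : ((n : ℤ) + 1) * p.1.1 = ((m : ℤ) + 1) * q.1.1 := congrArg Prod.fst h'
    have h2 : ((n : ℤ) + 1) * p.1.2 = ((m : ℤ) + 1) * q.1.2 := congrArg Prod.snd h'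
    have hp := Int.isCoprime_iff_gcd_eq_one.1 p.2
    have hq := Int.isCoprime_iff_gcd_eq_one.1 q.2
    have hg : Int.gcd (((n : ℤ) + 1) * p.1.1) (((n : ℤ) + 1) * p.1.2) =
      Int.gcd (((m : ℤ) + 1) * q.1.1) (((m : ℤ) + 1) * q.1.2) := by rw [h1, h2]
    rw [Int.gcd_mul_left, Int.gcd_mul_left, hp, hq] at hg
    have hnm : n = m := by omega
    subst hnm
    have h3 : ((n : ℤ) + 1) ≠ 0 := by positivity
    have : p = q := Subtype.ext (Prod.ext (mul_left_cancel₀ h3 h1) (mul_left_cancel₀ h3 h2))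
    rw [this]
  · rintro ⟨⟨x, y⟩, hxy⟩
    have hg : 0 < Int.gcd x y := by
      rw [Nat.pos_iff_ne_zero, Ne, Int.gcd_eq_zero_iff]
      rintro ⟨rfl, rfl⟩
      exact hxy rfl
    obtain ⟨x', y', hc, hx, hy⟩ := Int.exists_gcd_one hg
    refine ⟨(Int.gcd x y - 1, ⟨(x', y'), Int.isCoprime_iff_gcd_eq_one.2 hc⟩), ?_⟩
    have e : (((Int.gcd x y - 1 : ℕ) : ℤ) + 1) = Int.gcd x y := by omega
    apply Subtype.ext
    apply Prod.ext
    · change (((Int.gcd x y - 1 : ℕ) : ℤ) + 1) * x' = x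
      rw [e, mul_comm]; exact hx.symm
    · change (((Int.gcd x y - 1 : ℕ) : ℤ) + 1) * y' = y
      rw [e, mul_comm]; exact hy.symm

lemma epstein_eq {k : ℕ} (hk : 2 ≤ k) (ha : 0 < a) (hd : b ^ 2 - 4 * a * c < 0) :
    epstein a b c k = (∑' n : ℕ, (((n : ℝ) + 1) ^ (2 * k))⁻¹) *
      ∑' p : CP, ((QA a b c p.1.1 p.1.2 : ℝ) ^ k)⁻¹ := by
  have hs1 : Summable (fun n : ℕ => (((n : ℝ) + 1) ^ (2 * k))⁻¹) := by
    have h := (summable_nat_add_iff 1).2 (Real.summable_nat_pow_inv (p := 2 * k) |>.2 (by omega))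
    simpa using h
  have hs2 := summable_QAk hk ha hd
  have h1 := tsum_mul_tsum_of_summable_norm hs1.norm hs2.norm
  rw [h1]
  unfold epstein
  rw [← (Equiv.ofBijective scl scl_bij).tsum_eq]
  refine tsum_congr fun q => ?_
  obtain ⟨n, p⟩ := q
  rw [Equiv.ofBijective_apply]
  have e : (a * (scl (n, p)).1.1 ^ 2 + b * (scl (n, p)).1.1 * (scl (n, p)).1.2 +
      c * (scl (n, p)).1.2 ^ 2 : ℤ) = ((n : ℤ) + 1) ^ 2 * QA a b c p.1.1 p.1.2 := by
    unfold scl QA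
    simp only
    ring
  rw [e, zpow_neg, zpow_natCast]
  push_cast
  rw [mul_pow, ← pow_mul, mul_inv]

lemma zeta_eq {k : ℕ} (hk : 2 ≤ k) :
    riemannZeta (2 * k) = ((∑' n : ℕ, (((n : ℝ) + 1) ^ (2 * k))⁻¹ : ℝ) : ℂ) := by
  have hre : 1 < ((2 : ℂ) * k).re := by
    have : (2 : ℝ) ≤ k := by exact_mod_cast hk
    simp
    linarith
  rw [zeta_eq_tsum_one_div_nat_add_one_cpow hre, Complex.ofReal_tsum]
  refine tsum_congr fun n => ?_
  push_cast
  rw [one_div]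
  congr 1
  exact_mod_cast Complex.cpow_natCast ((n : ℂ) + 1) (2 * k)

lemma zeta_ne {k : ℕ} (hk : 2 ≤ k) : riemannZeta (2 * k) ≠ 0 := by
  apply riemannZeta_ne_zero_of_one_lt_re
  have : (2 : ℝ) ≤ k := by exact_mod_cast hk
  simp
  linarith

/-- the constant in front of the series -/
def cst (k : ℕ) (a b c : ℤ) : ℝ :=
  (((b ^ 2 - 4 * a * c).natAbs : ℝ)) ^ ((k : ℝ) - 1 / 2) / (2 * π * (wP a b c : ℝ))

lemma fkP_eq (k : ℕ) (a b c : ℤ) (y : ℝ) :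
    fkP k a b c ((y : ℂ) * Complex.I) = (cst k a b c : ℂ) * SS k a b c y := by
  unfold fkP cst SS
  push_cast
  rfl

lemma period_top {k : ℕ} (hk : 2 ≤ k) (ha : 0 < a) (hd : b ^ 2 - 4 * a * c < 0)
    (hre : ∀ M : SL2Z, (moeb M (cmPoint a b c)).re ≠ 0) :
    (periodN (2 * k - 2) (fkP k a b c)).re = cst k a b c *
      -((-1) ^ k * π / (2 * k - 1) * ∑' p : CP, ((QA a b c p.1.1 p.1.2 : ℝ) ^ k)⁻¹) := by
  rw [← GG_main hk ha hd hre]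
  unfold periodN
  simp only [fkP_eq, mul_assoc, SS_mul ha hd]
  rw [integral_const_mul, Complex.re_ofReal_mul]

lemma period_zero {k : ℕ} (hk : 2 ≤ k) :
    periodN 0 (fkP k a b c) = (-1) ^ k * periodN (2 * k - 2) (fkP k a b c) := by
  unfold periodN
  simp only [fkP_eq, pow_zero, mul_one, mul_assoc]
  rw [integral_const_mul, integral_const_mul, SS_int k (by omega)]
  ring

lemma period_zero_re {k : ℕ} (hk : 2 ≤ k) :
    (periodN 0 (fkP k a b c)).re = (-1 : ℝ) ^ k * (periodN (2 * k - 2) (fkP k a b c)).re := by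
  rw [period_zero hk, show ((-1 : ℂ) ^ k) = (((-1 : ℝ) ^ k : ℝ) : ℂ) by push_cast; rfl,
    Complex.re_ofReal_mul]

end fin

end Aux

/-- the outer periods of `f_{k,P}` in terms of the Epstein zeta function. -/
theorem outer_periods_fkP (k : ℕ) (hk : 2 ≤ k)
    (a b c : ℤ) (ha : 0 < a) (hd : b ^ 2 - 4 * a * c < 0)
    (hre : ∀ M : SL2Z, (moeb M (cmPoint a b c)).re ≠ 0) :
    (periodN 0 (fkP k a b c)).re = (-1 : ℝ) ^ k * (periodN (2 * k - 2) (fkP k a b c)).re ∧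
    ((periodN 0 (fkP k a b c)).re : ℂ) =
      -(((((b ^ 2 - 4 * a * c).natAbs : ℝ)) ^ ((k : ℝ) - 1 / 2) : ℝ) : ℂ) *
          (epstein a b c k : ℂ) /
        (2 * (2 * (k : ℂ) - 1) * (wP a b c : ℂ) * riemannZeta (2 * k)) := by

  refine ⟨period_zero_re hk, ?_⟩
  have hk1 : (2 : ℝ) ≤ k := by exact_mod_cast hk
  have hsq : ((-1 : ℝ) ^ k) * (-1) ^ k = 1 := by
    rw [← mul_pow]; norm_num
  have hz := zeta_ne hk
  rw [zeta_eq hk] at hz ⊢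
  rw [epstein_eq hk ha hd, period_zero_re hk, period_top hk ha hd hre]
  set Z := ∑' n : ℕ, (((n : ℝ) + 1) ^ (2 * k))⁻¹
  set X := ∑' p : CP, ((QA a b c p.1.1 p.1.2 : ℝ) ^ k)⁻¹
  have hZ : Z ≠ 0 := by exact_mod_cast hz
  unfold cst
  have h1 : (2 * (k : ℝ) - 1) ≠ 0 := by linarith
  set Δ := (((b ^ 2 - 4 * a * c).natAbs : ℝ)) ^ ((k : ℝ) - 1 / 2)
  have hπ := Real.pi_ne_zero
  have goal : (-1 : ℝ) ^ k * (Δ / (2 * π * (wP a b c : ℝ)) * -((-1) ^ k * π / (2 * k - 1) * X)) =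
      -Δ * (Z * X) / (2 * (2 * (k : ℝ) - 1) * (wP a b c : ℝ) * Z) := by
    rcases eq_or_ne (wP a b c : ℝ) 0 with hw | hw
    · rw [hw]; simp
    · have e : (-1 : ℝ) ^ k * (Δ / (2 * π * (wP a b c : ℝ)) * -((-1) ^ k * π / (2 * k - 1) * X)) =
        -(((-1 : ℝ) ^ k) * (-1) ^ k) * (Δ / (2 * π * (wP a b c : ℝ)) * (π / (2 * k - 1) * X)) := by ring
      rw [e, hsq]
      field_simp
  rw [goal]
  push_cast
  rfl

end LHMF
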